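/- arXiv:1903.10399 — 2 statements merged into one kernel-verified Lean document; each statement's English description precedes it below -/
import Mathlib

section
/- (Regret bound for the within-task algorithm.) Assume ‖x_k‖ ≤ R and ℓ(·, y_k) is L-Lipschitz for all k. Then the iterates (w^{(k)})_{k=1}^n of Algorithm 1 satisfy, for every w ∈ ℝ^d, (1/n) Σ_{k=1}^n [ ℓ(⟨x_k, w^{(k)}⟩, y_k) + (λ/2)‖w^{(k)} − h‖² ] − R_{Z_n,h}(w) ≤ (1/n) Σ_{k=1}^n [ ℓ(⟨x_k, w^{(k)}⟩, y_k) + (λ/2)‖w^{(k)} − h‖² ] − min_{w'} R_{Z_n,h}(w') ≤ 2 R² L² (log n + 1)/(λ n). -/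
open MeasureTheory Real
open scoped InnerProductSpace

noncomputable section

abbrev Vec (d : ℕ) := EuclideanSpace ℝ (Fin d)
abbrev Pt (d : ℕ) := Vec d × ℝ

/-- Empirical risk of `w` on the dataset `S`. -/
def empRisk {d n : ℕ} (ℓ : ℝ → ℝ → ℝ) (S : Fin n → Pt d) (w : Vec d) : ℝ :=
  (n : ℝ)⁻¹ * ∑ k, ℓ (⟪(S k).1, w⟫_ℝ) ((S k).2)

/-- Biased regularized empirical risk. -/
def regRisk {d n : ℕ} (ℓ : ℝ → ℝ → ℝ) (lam : ℝ) (S : Fin n → Pt d)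
    (h w : Vec d) : ℝ :=
  empRisk ℓ S w + lam / 2 * ‖w - h‖ ^ 2

/-- True risk of `w` under the task distribution `μ`. -/
def trueRisk {d : ℕ} (ℓ : ℝ → ℝ → ℝ) (μ : Measure (Pt d)) (w : Vec d) : ℝ :=
  ∫ z, ℓ (⟪z.1, w⟫_ℝ) (z.2) ∂μ

/-- `u` is a subgradient of `f : ℝ → ℝ` at `a`. -/
def IsSubgradAt (f : ℝ → ℝ) (u a : ℝ) : Prop :=
  ∀ b, f a + u * (b - a) ≤ f b

/-!
Each regularized loss `ℓ_k + λ/2 ‖· - h‖²` is `λ`-strongly convex, and for such losses the step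
sizes `1/(kλ)` make the squared distances to a comparator telescope, leaving the regret
`Σ_k ‖G_k‖² / (2kλ)`, where `G_k` is the `k`-th step direction. The iterates stay in the ball of
radius `RL/λ` around `h`, because each step moves to a convex combination of the current iterate
and a point of that ball; hence `‖G_k‖ ≤ 2RL`, and the harmonic sum contributes the logarithm.
-/

lemma IsSubgradAt.abs_le {f : ℝ → ℝ} {u a L : ℝ} (hu : IsSubgradAt f u a)
    (hf : ∀ a b, |f a - f b| ≤ L * |a - b|) : |u| ≤ L := by
  have lower : f a + u ≤ f (a + 1) := by simpa using hu (a + 1)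
  have upper : f a - u ≤ f (a - 1) := by simpa [sub_eq_add_neg] using hu (a - 1)
  have lip_add : f (a + 1) - f a ≤ L := by simpa using (le_abs_self _).trans (hf (a + 1) a)
  have lip_sub : f (a - 1) - f a ≤ L := by simpa using (le_abs_self _).trans (hf (a - 1) a)
  exact _root_.abs_le.2 ⟨by linarith, by linarith⟩

lemma sum_range_inv_succ_le_log_add_one (n : ℕ) :
    ∑ k ∈ Finset.range n, ((k : ℝ) + 1)⁻¹ ≤ Real.log n + 1 := by
  simpa [harmonic, add_comm] using harmonic_le_one_add_log n

lemma mean_add_const {n : ℕ} (hn : 1 ≤ n) (a : Fin n → ℝ) (c : ℝ) :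
    (n : ℝ)⁻¹ * ∑ k, (a k + c) = (n : ℝ)⁻¹ * ∑ k, a k + c := by
  have hn₀ : (n : ℝ) ≠ 0 := by positivity
  simp [Finset.sum_add_distrib, mul_add, hn₀]

lemma sub_le_sub_ciInf_and_le {ι : Type*} {f : ι → ℝ} {a B : ℝ} (hf : ∀ i, a - f i ≤ B) (i : ι) :
    a - f i ≤ a - ⨅ j, f j ∧ a - ⨅ j, f j ≤ B := by
  have : Nonempty ι := ⟨i⟩
  have lower : ∀ j, a - B ≤ f j := fun j => sub_le_comm.1 (hf j)
  have bdd : BddBelow (Set.range f) := ⟨a - B, Set.forall_mem_range.2 lower⟩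
  exact ⟨sub_le_sub_left (ciInf_le bdd i) a, sub_le_comm.1 (le_ciInf lower)⟩

section Subgradient

variable {E : Type*} [NormedAddCommGroup E] [InnerProductSpace ℝ E]

/-- `g` is a subgradient of `f` at `p` witnessing strong convexity with modulus `m`: the affine
minorant is improved by `m / 2 * ‖q - p‖ ^ 2`. For `m = 0` this is an ordinary subgradient. -/
def IsStrongSubgradAt (m : ℝ) (f : E → ℝ) (g p : E) : Prop :=
  ∀ q, f p + ⟪g, q - p⟫_ℝ + m / 2 * ‖q - p‖ ^ 2 ≤ f q

lemma IsSubgradAt.comp_inner {φ : ℝ → ℝ} {u : ℝ} {x p : E} (hu : IsSubgradAt φ u ⟪x, p⟫_ℝ) :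
    IsStrongSubgradAt 0 (fun w => φ ⟪x, w⟫_ℝ) (u • x) p := by
  intro q
  simpa [real_inner_smul_left, inner_sub_right, mul_sub] using hu ⟪x, q⟫_ℝ

namespace IsStrongSubgradAt

variable {m : ℝ} {f : E → ℝ} {g p : E}

lemma add_sq_norm (hg : IsStrongSubgradAt m f g p) (lam : ℝ) (h : E) :
    IsStrongSubgradAt (m + lam) (fun w => f w + lam / 2 * ‖w - h‖ ^ 2)
      (g + lam • (p - h)) p := by
  intro q
  have expand : ‖q - h‖ ^ 2 = ‖p - h‖ ^ 2 + 2 * ⟪p - h, q - p⟫_ℝ + ‖q - p‖ ^ 2 := by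
    rw [← norm_add_sq_real, sub_add_sub_comm, add_comm p q, add_sub_add_right_eq_sub]
  have inner_eq : ⟪g + lam • (p - h), q - p⟫_ℝ = ⟪g, q - p⟫_ℝ + lam * ⟪p - h, q - p⟫_ℝ := by
    rw [inner_add_left, real_inner_smul_left]
  simp only [expand, inner_eq]
  linarith [hg q]

lemma sub_le_of_step (hg : IsStrongSubgradAt m f g p) {η : ℝ} (hη : 0 < η) (w : E) :
    f p - f w ≤ (2 * η)⁻¹ * (‖p - w‖ ^ 2 - ‖p - η • g - w‖ ^ 2) - m / 2 * ‖p - w‖ ^ 2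
      + η / 2 * ‖g‖ ^ 2 := by
  have dist_step : ‖p - η • g - w‖ ^ 2 = ‖p - w‖ ^ 2 - 2 * η * ⟪g, p - w⟫_ℝ + η ^ 2 * ‖g‖ ^ 2 := by
    rw [sub_right_comm, norm_sub_sq_real, real_inner_smul_right, real_inner_comm, norm_smul,
      mul_pow, Real.norm_eq_abs, sq_abs]
    ring
  have inner_eq : (2 * η)⁻¹ * (‖p - w‖ ^ 2 - ‖p - η • g - w‖ ^ 2) + η / 2 * ‖g‖ ^ 2
      = ⟪g, p - w⟫_ℝ := by
    rw [dist_step]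
    field_simp
    ring
  have minorant := hg w
  rw [← neg_sub p w, inner_neg_right, norm_neg] at minorant
  linarith

lemma sub_le_of_step_inv_mul (hg : IsStrongSubgradAt m f g p) (hm : 0 < m) {t : ℝ} (ht : 0 < t)
    (w : E) :
    f p - f w ≤ m / 2 * ((t - 1) * ‖p - w‖ ^ 2 - t * ‖p - (t * m)⁻¹ • g - w‖ ^ 2)
      + ‖g‖ ^ 2 / (2 * m) * t⁻¹ := by
  calc f p - f w
      ≤ (2 * (t * m)⁻¹)⁻¹ * (‖p - w‖ ^ 2 - ‖p - (t * m)⁻¹ • g - w‖ ^ 2) - m / 2 * ‖p - w‖ ^ 2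
          + (t * m)⁻¹ / 2 * ‖g‖ ^ 2 :=
        hg.sub_le_of_step (by positivity) w
    _ = m / 2 * ((t - 1) * ‖p - w‖ ^ 2 - t * ‖p - (t * m)⁻¹ • g - w‖ ^ 2)
          + ‖g‖ ^ 2 / (2 * m) * t⁻¹ := by
        field_simp
        ring

end IsStrongSubgradAt

theorem regret_le_of_isStrongSubgradAt {n : ℕ} {m M : ℝ} (hm : 0 < m) {f : Fin n → E → ℝ}
    {g : Fin n → E} {p : ℕ → E} (hg : ∀ k, IsStrongSubgradAt m (f k) (g k) (p k))
    (hgM : ∀ k, ‖g k‖ ≤ M)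
    (hp : ∀ k : Fin n, p (k + 1) = p k - (((k : ℝ) + 1) * m)⁻¹ • g k) (w : E) :
    ∑ k, (f k (p k) - f k w) ≤ M ^ 2 / (2 * m) * (Real.log n + 1) := by
  let potential (k : ℕ) : ℝ := m / 2 * (k * ‖p k - w‖ ^ 2)
  have step (k : Fin n) : f k (p k) - f k w
      ≤ (potential k - potential (k + 1)) + M ^ 2 / (2 * m) * ((k : ℝ) + 1)⁻¹ := by
    calc f k (p k) - f k w
        ≤ m / 2 * (((k : ℝ) + 1 - 1) * ‖p k - w‖ ^ 2 - ((k : ℝ) + 1) * ‖p (k + 1) - w‖ ^ 2)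
            + ‖g k‖ ^ 2 / (2 * m) * ((k : ℝ) + 1)⁻¹ := by
          rw [hp k]
          exact (hg k).sub_le_of_step_inv_mul hm (by positivity) w
      _ = (potential k - potential (k + 1)) + ‖g k‖ ^ 2 / (2 * m) * ((k : ℝ) + 1)⁻¹ := by
          simp only [potential, Nat.cast_add_one]
          ring
      _ ≤ (potential k - potential (k + 1)) + M ^ 2 / (2 * m) * ((k : ℝ) + 1)⁻¹ := by
          gcongr
          exact hgM k
  have potential_nonneg : 0 ≤ potential n := by positivity
  calc ∑ k, (f k (p k) - f k w)
      ≤ ∑ k : Fin n, ((potential k - potential (k + 1)) + M ^ 2 / (2 * m) * ((k : ℝ) + 1)⁻¹) :=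
        Finset.sum_le_sum fun k _ => step k
    _ = (potential 0 - potential n)
          + M ^ 2 / (2 * m) * ∑ k ∈ Finset.range n, ((k : ℝ) + 1)⁻¹ := by
        rw [Fin.sum_univ_eq_sum_range
            (fun k => (potential k - potential (k + 1)) + M ^ 2 / (2 * m) * ((k : ℝ) + 1)⁻¹) n,
          Finset.sum_add_distrib, Finset.sum_range_sub', Finset.mul_sum]
    _ ≤ M ^ 2 / (2 * m) * ∑ k ∈ Finset.range n, ((k : ℝ) + 1)⁻¹ := by
        have potential_zero : potential 0 = 0 := by simp [potential]
        linarith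
    _ ≤ M ^ 2 / (2 * m) * (Real.log n + 1) := by
        gcongr
        exact sum_range_inv_succ_le_log_add_one n

lemma norm_sub_smul_add_smul_le {v g : E} {η lam r : ℝ} (hη : 0 ≤ η) (hηlam : η * lam ≤ 1)
    (hg : ‖g‖ ≤ lam * r) (hv : ‖v‖ ≤ r) :
    ‖v - η • (g + lam • v)‖ ≤ r := by
  have hcoef : 0 ≤ 1 - η * lam := sub_nonneg.2 hηlam
  calc ‖v - η • (g + lam • v)‖ = ‖(1 - η * lam) • v - η • g‖ := by congr 1; module
    _ ≤ (1 - η * lam) * ‖v‖ + η * ‖g‖ := by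
      simpa only [norm_smul, Real.norm_of_nonneg hcoef, Real.norm_of_nonneg hη] using
        norm_sub_le ((1 - η * lam) • v) (η • g)
    _ ≤ (1 - η * lam) * r + η * (lam * r) := by gcongr
    _ = r := by ring

section RegularizedDescent

variable {n : ℕ} {lam C : ℝ} {g : Fin n → E} {p : ℕ → E} {h : E}

lemma norm_iterate_sub_le (hlam : 0 < lam) (hC : 0 ≤ C) (hg : ∀ k, ‖g k‖ ≤ C) (hp₀ : p 0 = h)
    (hp : ∀ k : Fin n, p (k + 1) = p k - (((k : ℝ) + 1) * lam)⁻¹ • (g k + lam • (p k - h)))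
    {k : ℕ} (hk : k ≤ n) : ‖p k - h‖ ≤ C / lam := by
  induction k with
  | zero =>
    rw [hp₀, sub_self, norm_zero]
    positivity
  | succ k ih =>
    have hη : (((k : ℝ) + 1) * lam)⁻¹ * lam ≤ 1 := by
      rw [mul_inv, inv_mul_cancel_right₀ hlam.ne']
      exact inv_le_one_of_one_le₀ (by simp)
    rw [hp ⟨k, hk⟩, sub_right_comm]
    refine norm_sub_smul_add_smul_le (by positivity) hη ?_ (ih (by lia))
    rw [mul_div_cancel₀ C hlam.ne']
    exact hg _

theorem regularized_regret_le (hlam : 0 < lam) {f : Fin n → E → ℝ}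
    (hf : ∀ k, IsStrongSubgradAt 0 (f k) (g k) (p k)) (hg : ∀ k, ‖g k‖ ≤ C) (hp₀ : p 0 = h)
    (hp : ∀ k : Fin n, p (k + 1) = p k - (((k : ℝ) + 1) * lam)⁻¹ • (g k + lam • (p k - h)))
    (w : E) :
    ∑ k, ((f k (p k) + lam / 2 * ‖p k - h‖ ^ 2) - (f k w + lam / 2 * ‖w - h‖ ^ 2))
      ≤ 2 * C ^ 2 / lam * (Real.log n + 1) := by
  have subgrad (k : Fin n) : IsStrongSubgradAt lam (fun w => f k w + lam / 2 * ‖w - h‖ ^ 2)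
      (g k + lam • (p k - h)) (p k) := by
    simpa only [zero_add] using (hf k).add_sq_norm lam h
  have direction_le (k : Fin n) : ‖g k + lam • (p k - h)‖ ≤ 2 * C := by
    have C_nonneg : 0 ≤ C := (norm_nonneg _).trans (hg k)
    calc ‖g k + lam • (p k - h)‖ ≤ ‖g k‖ + lam * ‖p k - h‖ := by
          simpa only [norm_smul, Real.norm_of_nonneg hlam.le] using
            norm_add_le (g k) (lam • (p k - h))
      _ ≤ C + lam * (C / lam) := by
          gcongr
          exacts [hg k, norm_iterate_sub_le hlam C_nonneg hg hp₀ hp k.2.le]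
      _ = 2 * C := by rw [mul_div_cancel₀ C hlam.ne', two_mul]
  calc ∑ k, ((f k (p k) + lam / 2 * ‖p k - h‖ ^ 2) - (f k w + lam / 2 * ‖w - h‖ ^ 2))
      ≤ (2 * C) ^ 2 / (2 * lam) * (Real.log n + 1) :=
        regret_le_of_isStrongSubgradAt hlam subgrad direction_le hp w
    _ = 2 * C ^ 2 / lam * (Real.log n + 1) := by
        field_simp

end RegularizedDescent

theorem stmt12_general {n : ℕ} (hn : 1 ≤ n) {R L lam : ℝ} (hlam : 0 < lam)
    {x : Fin n → E} {φ : Fin n → ℝ → ℝ} (hφ : ∀ k a b, |φ k a - φ k b| ≤ L * |a - b|)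
    (hx : ∀ k, ‖x k‖ ≤ R) {h : E} {W : ℕ → E} {u : Fin n → ℝ} (hW₁ : W 1 = h)
    (hu : ∀ k : Fin n, IsSubgradAt (φ k) (u k) ⟪x k, W (k + 1)⟫_ℝ)
    (hW : ∀ k : Fin n, W (k + 2) = W (k + 1) - (((k + 1 : ℕ) : ℝ) * lam)⁻¹ •
      (u k • x k + lam • (W (k + 1) - h))) (w : E) :
    (n : ℝ)⁻¹ * ∑ k : Fin n, (φ k ⟪x k, W (k + 1)⟫_ℝ + lam / 2 * ‖W (k + 1) - h‖ ^ 2)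
          - ((n : ℝ)⁻¹ * ∑ k, φ k ⟪x k, w⟫_ℝ + lam / 2 * ‖w - h‖ ^ 2)
        ≤ (n : ℝ)⁻¹ * ∑ k : Fin n, (φ k ⟪x k, W (k + 1)⟫_ℝ + lam / 2 * ‖W (k + 1) - h‖ ^ 2)
          - (⨅ v, ((n : ℝ)⁻¹ * ∑ k, φ k ⟪x k, v⟫_ℝ + lam / 2 * ‖v - h‖ ^ 2))
      ∧ (n : ℝ)⁻¹ * ∑ k : Fin n, (φ k ⟪x k, W (k + 1)⟫_ℝ + lam / 2 * ‖W (k + 1) - h‖ ^ 2)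
          - (⨅ v, ((n : ℝ)⁻¹ * ∑ k, φ k ⟪x k, v⟫_ℝ + lam / 2 * ‖v - h‖ ^ 2))
        ≤ 2 * R ^ 2 * L ^ 2 * (Real.log n + 1) / (lam * n) := by
  have grad_le (k : Fin n) : ‖u k • x k‖ ≤ L * R := by
    have u_le : |u k| ≤ L := (hu k).abs_le (hφ k)
    rw [norm_smul, Real.norm_eq_abs]
    exact mul_le_mul u_le (hx k) (norm_nonneg _) ((abs_nonneg _).trans u_le)
  have regret_le (v : E) :
      (n : ℝ)⁻¹ * ∑ k : Fin n, (φ k ⟪x k, W (k + 1)⟫_ℝ + lam / 2 * ‖W (k + 1) - h‖ ^ 2)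
          - ((n : ℝ)⁻¹ * ∑ k, φ k ⟪x k, v⟫_ℝ + lam / 2 * ‖v - h‖ ^ 2)
        ≤ 2 * R ^ 2 * L ^ 2 * (Real.log n + 1) / (lam * n) := by
    rw [← mean_add_const hn, ← mul_sub, ← Finset.sum_sub_distrib]
    calc _ ≤ (n : ℝ)⁻¹ * (2 * (L * R) ^ 2 / lam * (Real.log n + 1)) := by
          gcongr
          exact regularized_regret_le (p := fun k => W (k + 1)) hlam
            (fun k => (hu k).comp_inner) grad_le hW₁ (by simpa using hW) v
      _ = 2 * R ^ 2 * L ^ 2 * (Real.log n + 1) / (lam * n) := by field_simp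
  exact sub_le_sub_ciInf_and_le regret_le w

end Subgradient

/-- Regret bound for the within-task algorithm: for every `w`,
`(1/n) Σ_k ℓ_{k,h}(w^{(k)}) - R_{Z_n,h}(w)
  ≤ (1/n) Σ_k ℓ_{k,h}(w^{(k)}) - min R_{Z_n,h} ≤ 2R²L²(log n + 1)/(λn)`. -/
theorem stmt12
    (d n : ℕ) (hd : 1 ≤ d) (hn : 1 ≤ n)
    (R L lam : ℝ) (hR : 0 ≤ R) (hL : 0 ≤ L) (hlam : 0 < lam)
    (Y : Set ℝ) (ℓ : ℝ → ℝ → ℝ)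
    (hℓ0 : ∀ a y, y ∈ Y → 0 ≤ ℓ a y)
    (hℓconv : ∀ y ∈ Y, ConvexOn ℝ Set.univ fun a => ℓ a y)
    (hℓlip : ∀ y ∈ Y, ∀ a b, |ℓ a y - ℓ b y| ≤ L * |a - b|)
    (S : Fin n → Pt d) (hSY : ∀ k, (S k).2 ∈ Y)
    (hSR : ∀ k, ‖(S k).1‖ ≤ R)
    (h : Vec d)
    -- Algorithm 1: SGD on the biased regularized risk
    (W : ℕ → Vec d) (u' : Fin n → ℝ)
    (hW1 : W 1 = h)
    (hsub : ∀ k : Fin n,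
      IsSubgradAt (fun a => ℓ a (S k).2) (u' k) (⟪(S k).1, W (k.1 + 1)⟫_ℝ))
    (hrec : ∀ k : Fin n, W (k.1 + 2)
      = W (k.1 + 1) - (((k.1 + 1 : ℕ) : ℝ) * lam)⁻¹ •
          (u' k • (S k).1 + lam • (W (k.1 + 1) - h))) :
    ∀ w : Vec d,
      ((n : ℝ)⁻¹ * ∑ k : Fin n, (ℓ (⟪(S k).1, W (k.1 + 1)⟫_ℝ) ((S k).2)
            + lam / 2 * ‖W (k.1 + 1) - h‖ ^ 2)
          - regRisk ℓ lam S h w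
        ≤ (n : ℝ)⁻¹ * ∑ k : Fin n, (ℓ (⟪(S k).1, W (k.1 + 1)⟫_ℝ) ((S k).2)
            + lam / 2 * ‖W (k.1 + 1) - h‖ ^ 2)
          - ⨅ w' : Vec d, regRisk ℓ lam S h w')
      ∧ ((n : ℝ)⁻¹ * ∑ k : Fin n, (ℓ (⟪(S k).1, W (k.1 + 1)⟫_ℝ) ((S k).2)
            + lam / 2 * ‖W (k.1 + 1) - h‖ ^ 2)
          - (⨅ w' : Vec d, regRisk ℓ lam S h w')
        ≤ 2 * R ^ 2 * L ^ 2 * (Real.log n + 1) / (lam * n)) := fun w =>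
  stmt12_general hn hlam (x := fun k => (S k).1) (φ := fun k a => ℓ a (S k).2)
    (fun k => hℓlip _ (hSY k)) hSR hW1 hsub hrec w
end
end

section
/- (Generalization error of the biased ERM.) Under bounded inputs and Lipschitz loss, for every probability measure μ on Z with ‖x‖ ≤ R μ-almost surely, every h ∈ ℝ^d and λ > 0, the biased ERM w_h satisfies E_{Z_n∼μ^n}[ R_μ(w_h(Z_n)) − R_{Z_n}(w_h(Z_n)) ] ≤ L² R²/(λ n). -/
open MeasureTheory Real
open scoped InnerProductSpace

noncomputable section

/-!
Exchanging a training example with a fresh one preserves the joint law of the sample and the fresh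
example. This symmetrization turns the expected gap into the mean effect, on the loss at an example
`z'`, of training on `z` instead of `z'`, where `z` and `z'` are independent and the other training
examples are fixed. Strong convexity alone bounds that effect by twice the claimed constant. The
sharp constant comes from the ridge structure of the loss: each minimizer `w` is a minimizer of one
strongly convex function perturbed by a linear force `v • x`, and signs can be chosen so that
`0 ≤ ⟪x, w⟫`. In normalized units, the effects of two examples on each other then add up to at most
`2` minus a kernel in the two examples whose mean over independent examples is nonnegative.
-/

section Response

variable {E : Type*} [NormedAddCommGroup E] [InnerProductSpace ℝ E] {x x' w w' : E} {v v' : ℝ}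

/-- `w` is a normalized response to the force `v • x`: minimizers of `u ↦ G u - v * ⟪x, u⟫` are of
this form when `‖x‖ ≤ 1`, `|v| ≤ 1` and `G` is a `1`-strongly convex function minimized at `0`. -/
structure IsResponse (x : E) (v : ℝ) (w : E) : Prop where
  norm_dir_le_one : ‖x‖ ≤ 1
  abs_coeff_le_one : |v| ≤ 1
  sq_norm_le : ‖w‖ ^ 2 ≤ v * ⟪x, w⟫_ℝ

/-- The part of `w` transverse to the direction `x`. Since `x` is not normalized, this is orthogonal
to `x` only if `‖x‖ = 1` or `⟪x, w⟫ = 0`. -/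
def transverse (x w : E) : E := w - ⟪x, w⟫_ℝ • x

/-- The one of `x` and `-x` that makes a nonnegative inner product with `w`. -/
def alignTo (x w : E) : E := if ⟪x, w⟫_ℝ < 0 then -x else x

/-- The slack in the inequality `|⟪x, w⟫ - ⟪x, w'⟫| ≤ 1 - ⟪x, w⟫ * ⟪x, w'⟫`, which holds when both
inner products lie in `[-1, 1]`. -/
def slack (x w w' : E) : ℝ := 1 - ⟪x, w⟫_ℝ * ⟪x, w'⟫_ℝ - |⟪x, w - w'⟫_ℝ|

lemma sq_inner_le_sq_norm (hx : ‖x‖ ≤ 1) (u : E) : ⟪x, u⟫_ℝ ^ 2 ≤ ‖u‖ ^ 2 :=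
  sq_le_sq.2 <| (abs_real_inner_le_norm x u).trans <|
    (mul_le_of_le_one_left (norm_nonneg u) hx).trans (le_abs_self _)

lemma sq_norm_transverse_le (hx : ‖x‖ ≤ 1) (w : E) :
    ‖transverse x w‖ ^ 2 ≤ ‖w‖ ^ 2 - ⟪x, w⟫_ℝ ^ 2 := by
  have hxx : ‖x‖ ^ 2 ≤ 1 := pow_le_one₀ (norm_nonneg x) hx
  have hexpand : ‖transverse x w‖ ^ 2 = ‖w‖ ^ 2 - (2 - ‖x‖ ^ 2) * ⟪x, w⟫_ℝ ^ 2 := by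
    rw [transverse, norm_sub_sq_real, real_inner_smul_right, norm_smul, mul_pow, Real.norm_eq_abs,
      sq_abs, real_inner_comm]
    ring
  nlinarith [sq_nonneg ⟪x, w⟫_ℝ]

lemma half_one_add_inner_le_one (hx : ‖x‖ ≤ 1) (hx' : ‖x'‖ ≤ 1) : (1 + ⟪x, x'⟫_ℝ) / 2 ≤ 1 := by
  linarith [(real_inner_le_norm x x').trans (mul_le_one₀ hx (norm_nonneg x') hx')]

lemma half_one_add_inner_nonneg (hx : ‖x‖ ≤ 1) (hx' : ‖x'‖ ≤ 1) : 0 ≤ (1 + ⟪x, x'⟫_ℝ) / 2 := by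
  linarith [neg_le_of_abs_le
    ((abs_real_inner_le_norm x x').trans (mul_le_one₀ hx (norm_nonneg x') hx'))]

namespace IsResponse

lemma sq_norm_le_inner (hw : IsResponse x v w) (h0 : 0 ≤ ⟪x, w⟫_ℝ) : ‖w‖ ^ 2 ≤ ⟪x, w⟫_ℝ :=
  hw.sq_norm_le.trans (mul_le_of_le_one_left h0 (le_of_abs_le hw.abs_coeff_le_one))

lemma inner_le_one (hw : IsResponse x v w) (h0 : 0 ≤ ⟪x, w⟫_ℝ) : ⟪x, w⟫_ℝ ≤ 1 := by
  nlinarith [hw.sq_norm_le_inner h0, sq_inner_le_sq_norm hw.norm_dir_le_one w]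

lemma norm_le_one (hw : IsResponse x v w) (h0 : 0 ≤ ⟪x, w⟫_ℝ) : ‖w‖ ≤ 1 :=
  (sq_le_one_iff₀ (norm_nonneg w)).1 ((hw.sq_norm_le_inner h0).trans (hw.inner_le_one h0))

lemma sq_norm_transverse_le_one_sub (hw : IsResponse x v w) (h0 : 0 ≤ ⟪x, w⟫_ℝ) :
    ‖transverse x w‖ ^ 2 ≤ 1 - ⟪x, w⟫_ℝ := by
  nlinarith [sq_norm_transverse_le hw.norm_dir_le_one w, hw.sq_norm_le_inner h0,
    sq_nonneg (1 - ⟪x, w⟫_ℝ)]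

lemma inner_le_one_of_norm_le_one (hw : IsResponse x v w) (h0 : 0 ≤ ⟪x, w⟫_ℝ) (hx' : ‖x'‖ ≤ 1) :
    ⟪x', w⟫_ℝ ≤ 1 :=
  (real_inner_le_norm x' w).trans (mul_le_one₀ hx' (norm_nonneg w) (hw.norm_le_one h0))

lemma sq_norm_transverse_div_two_le_one_sub (hw : IsResponse x v w) (h0 : 0 ≤ ⟪x, w⟫_ℝ)
    (hx' : ‖x'‖ ≤ 1) : ‖transverse x w‖ ^ 2 / 2 ≤ 1 - ⟪x', w⟫_ℝ := by
  nlinarith [sq_inner_le_sq_norm hx' w, hw.sq_norm_le_inner h0,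
    hw.sq_norm_transverse_le_one_sub h0, sq_nonneg (1 - ⟪x', w⟫_ℝ)]

lemma inner_le_coeff (hw : IsResponse x v w) (h0 : 0 < ⟪x, w⟫_ℝ) : ⟪x, w⟫_ℝ ≤ v :=
  le_of_mul_le_mul_right
    ((sq _).symm.trans_le ((sq_inner_le_sq_norm hw.norm_dir_le_one w).trans hw.sq_norm_le)) h0

lemma sq_norm_two_smul_sub_le (hw : IsResponse x v w) :
    ‖(2 : ℝ) • w - v • x‖ ^ 2 ≤ 1 - 4 * (v * ⟪x, w⟫_ℝ - ‖w‖ ^ 2) := by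
  have hvx : ‖v • x‖ ^ 2 ≤ 1 := by
    rw [norm_smul]
    exact pow_le_one₀ (by positivity)
      (mul_le_one₀ hw.abs_coeff_le_one (norm_nonneg x) hw.norm_dir_le_one)
  have hexpand : ‖(2 : ℝ) • w - v • x‖ ^ 2
      = ‖v • x‖ ^ 2 - 4 * (v * ⟪x, w⟫_ℝ - ‖w‖ ^ 2) := by
    rw [norm_sub_sq_real, real_inner_smul_left, real_inner_smul_right, norm_smul, mul_pow,
      real_inner_comm, Real.norm_of_nonneg zero_le_two]
    ring
  linarith

lemma abs_two_mul_inner_sub_le_one (hw : IsResponse x v w) (hx' : ‖x'‖ ≤ 1) :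
    |2 * ⟪x', w⟫_ℝ - v * ⟪x, x'⟫_ℝ| ≤ 1 := by
  have hinner : ⟪x', (2 : ℝ) • w - v • x⟫_ℝ ^ 2 ≤ 1 :=
    (sq_inner_le_sq_norm hx' _).trans (by linarith [hw.sq_norm_two_smul_sub_le, hw.sq_norm_le])
  rwa [inner_sub_right, real_inner_smul_right, real_inner_smul_right, real_inner_comm x,
    sq_le_one_iff_abs_le_one] at hinner

lemma half_one_add_inner_le (hw : IsResponse x v w) (h0 : 0 ≤ ⟪x, w⟫_ℝ) (hx' : ‖x'‖ ≤ 1) :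
    (1 + ⟪x, x'⟫_ℝ) / 2 ≤ 1 + ⟪x', w⟫_ℝ := by
  have hw1 : IsResponse x 1 w :=
    ⟨hw.norm_dir_le_one, by simp, by simpa using hw.sq_norm_le_inner h0⟩
  linarith [neg_le_of_abs_le (hw1.abs_two_mul_inner_sub_le_one hx')]

lemma sq_norm_le_of_mono (hw : IsResponse x v w) (hx' : ‖x'‖ ≤ 1)
    (hmono : ‖w - w'‖ ^ 2 ≤ ⟪v • x - v' • x', w - w'⟫_ℝ) :
    ‖w'‖ ^ 2 ≤ 1 - (2 * ⟪x', w⟫_ℝ - v * ⟪x, x'⟫_ℝ - ⟪x', w'⟫_ℝ) ^ 2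
      - 2 * v' * (⟪x', w⟫_ℝ - ⟪x', w'⟫_ℝ) := by
  -- `w` lies in the ball with diameter `[0, v • x]`, and `p` is twice its offset from the centre;
  -- hence `‖p‖ ≤ 1`, and `hmono` then bounds `‖p - w'‖` from above.
  set p : E := (2 : ℝ) • w - v • x with hp
  have hdist : ⟪x', p - w'⟫_ℝ ^ 2 ≤ ‖p - w'‖ ^ 2 := sq_inner_le_sq_norm hx' _
  have hinner : ⟪x', p - w'⟫_ℝ = 2 * ⟪x', w⟫_ℝ - v * ⟪x, x'⟫_ℝ - ⟪x', w'⟫_ℝ := by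
    rw [hp, inner_sub_right, inner_sub_right, real_inner_smul_right, real_inner_smul_right,
      real_inner_comm x]
  have hpw : ⟪p, w'⟫_ℝ = 2 * ⟪w, w'⟫_ℝ - v * ⟪x, w'⟫_ℝ := by
    rw [hp, inner_sub_left, real_inner_smul_left, real_inner_smul_left]
  have hexpand : ⟪v • x - v' • x', w - w'⟫_ℝ
      = v * ⟪x, w⟫_ℝ - v * ⟪x, w'⟫_ℝ - v' * (⟪x', w⟫_ℝ - ⟪x', w'⟫_ℝ) := by
    simp only [inner_sub_left, inner_sub_right, real_inner_smul_left]
    ring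
  rw [norm_sub_sq_real, hexpand] at hmono
  rw [hinner, norm_sub_sq_real, hpw] at hdist
  linarith [hw.sq_norm_two_smul_sub_le, hw.sq_norm_le]

lemma sq_norm_transverse_div_four_le_one_sub (hw : IsResponse x v w) (hw' : IsResponse x' v' w')
    (h0 : 0 ≤ ⟪x, w⟫_ℝ) (h0' : 0 ≤ ⟪x', w'⟫_ℝ)
    (hmono : ‖w - w'‖ ^ 2 ≤ ⟪v • x - v' • x', w - w'⟫_ℝ)
    (hlt : ⟪x', w'⟫_ℝ < ⟪x', w⟫_ℝ) : ‖transverse x' w'‖ ^ 2 / 4 ≤ 1 - ⟪x', w⟫_ℝ := by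
  have hm : ‖transverse x' w'‖ ^ 2 ≤ ‖w'‖ ^ 2 - ⟪x', w'⟫_ℝ ^ 2 :=
    sq_norm_transverse_le hw'.norm_dir_le_one w'
  rcases h0'.eq_or_lt' with hT | hT
  · nlinarith [hw'.sq_norm_le_inner h0', hw.inner_le_one_of_norm_le_one h0 hw'.norm_dir_le_one]
  have hvx : v * ⟪x, x'⟫_ℝ ≤ 1 := by
    refine (le_abs_self _).trans ?_
    rw [abs_mul]
    exact mul_le_one₀ hw.abs_coeff_le_one (abs_nonneg _) ((abs_real_inner_le_norm x x').trans
      (mul_le_one₀ hw.norm_dir_le_one (norm_nonneg x') hw'.norm_dir_le_one))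
  have hcoeff : ⟪x', w'⟫_ℝ * (⟪x', w⟫_ℝ - ⟪x', w'⟫_ℝ) ≤ v' * (⟪x', w⟫_ℝ - ⟪x', w'⟫_ℝ) :=
    mul_le_mul_of_nonneg_right (hw'.inner_le_coeff hT) (sub_nonneg.2 hlt.le)
  have hdist := hw.sq_norm_le_of_mono hw'.norm_dir_le_one hmono
  have hp := le_of_abs_le (hw.abs_two_mul_inner_sub_le_one hw'.norm_dir_le_one)
  have hT1 := hw'.inner_le_one h0'
  set T := ⟪x', w'⟫_ℝ
  set s := ⟪x', w⟫_ℝ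
  set p := 2 * s - v * ⟪x, x'⟫_ℝ with hp_def
  have hslack : 0 ≤ 4 * (1 - s) - (1 - (p - T) ^ 2 - 2 * T * (s - T) - T ^ 2) := calc
    0 ≤ (1 - p) ^ 2 + T * (1 - p) + (1 - v * ⟪x, x'⟫_ℝ) * (2 - T) :=
      add_nonneg (add_nonneg (sq_nonneg _) (mul_nonneg hT.le (sub_nonneg.2 hp)))
        (mul_nonneg (sub_nonneg.2 hvx) (by linarith))
    _ = _ := by rw [hp_def]; ring
  linarith

lemma half_one_add_inner_mul_sq_norm_transverse_le_slack (hw : IsResponse x v w)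
    (hw' : IsResponse x' v' w') (h0 : 0 ≤ ⟪x, w⟫_ℝ) (h0' : 0 ≤ ⟪x', w'⟫_ℝ)
    (hle : ⟪x', w⟫_ℝ ≤ ⟪x', w'⟫_ℝ) :
    (1 + ⟪x, x'⟫_ℝ) / 2 * ‖transverse x' w'‖ ^ 2 ≤ slack x' w w' := calc
  (1 + ⟪x, x'⟫_ℝ) / 2 * ‖transverse x' w'‖ ^ 2
      ≤ (1 + ⟪x', w⟫_ℝ) * (1 - ⟪x', w'⟫_ℝ) :=
        mul_le_mul (hw.half_one_add_inner_le h0 hw'.norm_dir_le_one)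
          (hw'.sq_norm_transverse_le_one_sub h0') (sq_nonneg _)
          ((half_one_add_inner_nonneg hw.norm_dir_le_one hw'.norm_dir_le_one).trans
            (hw.half_one_add_inner_le h0 hw'.norm_dir_le_one))
  _ = slack x' w w' := by
    rw [slack, inner_sub_right, abs_of_nonpos (sub_nonpos.2 hle)]
    ring

lemma one_sub_inner_le_slack (hw : IsResponse x v w) (hx' : ‖x'‖ ≤ 1) (h0 : 0 ≤ ⟪x, w⟫_ℝ)
    (h0' : 0 ≤ ⟪x', w'⟫_ℝ) (hle : ⟪x', w'⟫_ℝ ≤ ⟪x', w⟫_ℝ) :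
    1 - ⟪x', w⟫_ℝ ≤ slack x' w w' := calc
  1 - ⟪x', w⟫_ℝ ≤ (1 - ⟪x', w⟫_ℝ) * (1 + ⟪x', w'⟫_ℝ) :=
    le_mul_of_one_le_right (sub_nonneg.2 (hw.inner_le_one_of_norm_le_one h0 hx'))
      (le_add_of_nonneg_right h0')
  _ = slack x' w w' := by
    rw [slack, inner_sub_right, abs_of_nonneg (sub_nonneg.2 hle)]
    ring

lemma sq_norm_transverse_le_slack (hw : IsResponse x v w) (hw' : IsResponse x' v' w')
    (h0 : 0 ≤ ⟪x, w⟫_ℝ) (h0' : 0 ≤ ⟪x', w'⟫_ℝ)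
    (hmono : ‖w - w'‖ ^ 2 ≤ ⟪v • x - v' • x', w - w'⟫_ℝ) :
    (1 + ⟪x, x'⟫_ℝ) / 2 * ‖transverse x' w'‖ ^ 2 ≤ slack x' w w' ∨
      ‖transverse x w‖ ^ 2 / 2 ≤ slack x' w w' ∧ ‖transverse x' w'‖ ^ 2 / 4 ≤ slack x' w w' := by
  rcases le_or_gt ⟪x', w⟫_ℝ ⟪x', w'⟫_ℝ with hle | hlt
  · exact .inl (hw.half_one_add_inner_mul_sq_norm_transverse_le_slack hw' h0 h0' hle)
  · have hslack := hw.one_sub_inner_le_slack hw'.norm_dir_le_one h0 h0' hlt.le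
    exact .inr ⟨(hw.sq_norm_transverse_div_two_le_one_sub h0 hw'.norm_dir_le_one).trans hslack,
      (hw.sq_norm_transverse_div_four_le_one_sub hw' h0 h0' hmono hlt).trans hslack⟩

lemma abs_inner_sub_add_abs_inner_sub_le (hw : IsResponse x v w) (hw' : IsResponse x' v' w')
    (h0 : 0 ≤ ⟪x, w⟫_ℝ) (h0' : 0 ≤ ⟪x', w'⟫_ℝ)
    (hmono : ‖w - w'‖ ^ 2 ≤ ⟪v • x - v' • x', w - w'⟫_ℝ) :
    |⟪x', w - w'⟫_ℝ| + |⟪x, w' - w⟫_ℝ| ≤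
      2 - ⟪x', w'⟫_ℝ * ⟪x', w⟫_ℝ - ⟪x, w⟫_ℝ * ⟪x, w'⟫_ℝ
        - (1 + ⟪x, x'⟫_ℝ) / 2 * (‖transverse x w‖ * ‖transverse x' w'‖) := by
  have hmono' : ‖w' - w‖ ^ 2 ≤ ⟪v' • x' - v • x, w' - w⟫_ℝ := by
    rwa [← neg_sub w, norm_neg, ← neg_sub (v • x), inner_neg_neg]
  have hκ0 := half_one_add_inner_nonneg hw.norm_dir_le_one hw'.norm_dir_le_one
  have hκ1 := half_one_add_inner_le_one hw.norm_dir_le_one hw'.norm_dir_le_one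
  have hslack := hw.sq_norm_transverse_le_slack hw' h0 h0' hmono
  have hslack' := hw'.sq_norm_transverse_le_slack hw h0' h0 hmono'
  rw [real_inner_comm x x'] at hslack'
  set κ := (1 + ⟪x, x'⟫_ℝ) / 2
  set m := ‖transverse x w‖
  set m' := ‖transverse x' w'‖
  have hgoal : |⟪x', w - w'⟫_ℝ| + |⟪x, w' - w⟫_ℝ| = 2 - ⟪x', w'⟫_ℝ * ⟪x', w⟫_ℝ
      - ⟪x, w⟫_ℝ * ⟪x, w'⟫_ℝ - (slack x' w w' + slack x w' w) := by
    simp only [slack]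
    ring
  have hm0 : 0 ≤ κ * m ^ 2 := by positivity
  have hm0' : 0 ≤ κ * m' ^ 2 := by positivity
  have hκm : κ * m ^ 2 ≤ m ^ 2 := mul_le_of_le_one_left (sq_nonneg m) hκ1
  have hκm' : κ * m' ^ 2 ≤ m' ^ 2 := mul_le_of_le_one_left (sq_nonneg m') hκ1
  have hamgm (r : ℝ) : 2 * (κ * (m * m')) * r ≤ κ * m ^ 2 * r ^ 2 + κ * m' ^ 2 := by
    linarith [mul_nonneg hκ0 (sq_nonneg (r * m - m'))]
  rcases hslack with h | ⟨h, h'⟩ <;> rcases hslack' with k | ⟨k, k'⟩ <;>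
    linarith [hamgm 1, hamgm 2, hamgm (1 / 2)]

end IsResponse

end Response

section Align

variable {E : Type*} [NormedAddCommGroup E] [InnerProductSpace ℝ E] {x w : E} {v : ℝ}

lemma inner_alignTo_nonneg (x w : E) : 0 ≤ ⟪alignTo x w, w⟫_ℝ := by
  unfold alignTo
  split_ifs with h
  · rw [inner_neg_left]
    exact neg_nonneg.2 h.le
  · exact not_lt.1 h

lemma abs_inner_alignTo (x w u : E) : |⟪alignTo x w, u⟫_ℝ| = |⟪x, u⟫_ℝ| := by
  unfold alignTo
  split_ifs
  · rw [inner_neg_left, abs_neg]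
  · rfl

lemma IsResponse.exists_alignTo (hw : IsResponse x v w) :
    ∃ v', IsResponse (alignTo x w) v' w ∧ v' • alignTo x w = v • x := by
  unfold alignTo
  split_ifs
  · refine ⟨-v, ⟨?_, ?_, ?_⟩, neg_smul_neg v x⟩
    · simpa only [norm_neg] using hw.norm_dir_le_one
    · simpa only [abs_neg] using hw.abs_coeff_le_one
    · simpa only [inner_neg_left, neg_mul_neg] using hw.sq_norm_le
  · exact ⟨v, hw, rfl⟩

lemma measurable_alignTo {Z : Type*} [MeasurableSpace Z] [MeasurableSpace E] [BorelSpace E]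
    [SecondCountableTopology E] {X W : Z → E} (hX : Measurable X) (hW : Measurable W) :
    Measurable fun z => alignTo (X z) (W z) :=
  Measurable.ite (measurableSet_lt (hX.inner hW) measurable_const) hX.neg hX

end Align

section InfluenceKernel

variable {Z E : Type*} [NormedAddCommGroup E] [InnerProductSpace ℝ E]

/-- The symmetric kernel that controls how much the responses to two examples influence each other:
`w` is the response, `a` its part in the direction of its own force, `m` bounds the norm of the
remaining part, and `b` is `m` times the direction. -/
def influenceKernel (a b w : Z → E) (m : Z → ℝ) (p : Z × Z) : ℝ :=
  ⟪w p.1, a p.2⟫_ℝ + ⟪a p.1, w p.2⟫_ℝ + (m p.1 * m p.2 + ⟪b p.1, b p.2⟫_ℝ) / 2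

lemma IsResponse.abs_inner_sub_add_le_influenceKernel {X W : Z → E} {v : Z → ℝ} {p : Z × Z}
    (hres : IsResponse (X p.1) (v p.1) (W p.1)) (hres' : IsResponse (X p.2) (v p.2) (W p.2))
    (h0 : 0 ≤ ⟪X p.1, W p.1⟫_ℝ) (h0' : 0 ≤ ⟪X p.2, W p.2⟫_ℝ)
    (hmono : ‖W p.1 - W p.2‖ ^ 2 ≤ ⟪v p.1 • X p.1 - v p.2 • X p.2, W p.1 - W p.2⟫_ℝ) :
    |⟪X p.2, W p.1 - W p.2⟫_ℝ| + |⟪X p.1, W p.2 - W p.1⟫_ℝ| ≤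
      2 - influenceKernel (fun z => ⟪X z, W z⟫_ℝ • X z) (fun z => ‖transverse (X z) (W z)‖ • X z)
        W (fun z => ‖transverse (X z) (W z)‖) p := by
  refine (hres.abs_inner_sub_add_abs_inner_sub_le hres' h0 h0' hmono).trans_eq ?_
  simp only [influenceKernel, real_inner_smul_left, real_inner_smul_right,
    real_inner_comm (X p.2) (W p.1)]
  ring

end InfluenceKernel

section MeanInfluence

variable {Z E : Type*} [MeasurableSpace Z] {μ : Measure Z} [NormedAddCommGroup E]
  [InnerProductSpace ℝ E]

lemma integrable_inner_prod {f g : Z → E} (hf : Integrable f μ) (hg : Integrable g μ) :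
    Integrable (fun p : Z × Z => ⟪f p.1, g p.2⟫_ℝ) (μ.prod μ) :=
  hf.op_fst_snd (op := fun a b => ⟪a, b⟫_ℝ) continuous_inner
    ⟨1, fun a b => by simpa using norm_inner_le_norm (𝕜 := ℝ) a b⟩ hg

lemma integral_inner_prod [CompleteSpace E] [SFinite μ] {f g : Z → E} (hf : Integrable f μ)
    (hg : Integrable g μ) :
    ∫ p : Z × Z, ⟪f p.1, g p.2⟫_ℝ ∂μ.prod μ = ⟪∫ z, f z ∂μ, ∫ z, g z ∂μ⟫_ℝ :=
  integral_prod_bilin (innerSL ℝ) hf hg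

lemma neg_sq_integral_le_inner_integral {a w : Z → E} {m : Z → ℝ} (ha : Integrable a μ)
    (hw : Integrable w μ) (hm : Integrable m μ) (h : ∀ᵐ z ∂μ, ‖w z - a z‖ ≤ m z) :
    -(∫ z, m z ∂μ) ^ 2 ≤ 4 * ⟪∫ z, w z ∂μ, ∫ z, a z ∂μ⟫_ℝ := by
  have hdist : ‖(∫ z, w z ∂μ) - ∫ z, a z ∂μ‖ ≤ ∫ z, m z ∂μ := by
    rw [← integral_sub hw ha]
    exact norm_integral_le_of_norm_le hm h
  have hpolar := norm_add_sq_real (∫ z, w z ∂μ) (∫ z, a z ∂μ)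
  have hpolar' := norm_sub_sq_real (∫ z, w z ∂μ) (∫ z, a z ∂μ)
  linarith [pow_le_pow_left₀ (norm_nonneg _) hdist 2, sq_nonneg ‖(∫ z, w z ∂μ) + ∫ z, a z ∂μ‖]

lemma integrable_influenceKernel [SFinite μ] {a b w : Z → E} {m : Z → ℝ} (ha : Integrable a μ)
    (hb : Integrable b μ) (hw : Integrable w μ) (hm : Integrable m μ) :
    Integrable (influenceKernel a b w m) (μ.prod μ) :=
  ((integrable_inner_prod hw ha).add (integrable_inner_prod ha hw)).add
    (((hm.mul_prod hm).add (integrable_inner_prod hb hb)).div_const 2)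

lemma integral_influenceKernel_nonneg [CompleteSpace E] [SFinite μ] {a b w : Z → E} {m : Z → ℝ}
    (ha : Integrable a μ) (hb : Integrable b μ) (hw : Integrable w μ) (hm : Integrable m μ)
    (h : ∀ᵐ z ∂μ, ‖w z - a z‖ ≤ m z) : 0 ≤ ∫ p, influenceKernel a b w m p ∂μ.prod μ := by
  have hwa := integrable_inner_prod hw ha
  have haw := integrable_inner_prod ha hw
  have hmm := hm.mul_prod hm
  have hbb := integrable_inner_prod hb hb
  have hvalue : ∫ p, influenceKernel a b w m p ∂μ.prod μ
      = 2 * ⟪∫ z, w z ∂μ, ∫ z, a z ∂μ⟫_ℝ + ((∫ z, m z ∂μ) ^ 2 + ‖∫ z, b z ∂μ‖ ^ 2) / 2 := by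
    unfold influenceKernel
    rw [integral_add (hwa.fun_add haw) ((hmm.fun_add hbb).div_const 2), integral_add hwa haw,
      integral_div, integral_add hmm hbb, integral_inner_prod hw ha, integral_inner_prod ha hw,
      integral_inner_prod hb hb, integral_prod_mul, real_inner_self_eq_norm_sq, real_inner_comm]
    ring
  linarith [neg_sq_integral_le_inner_integral ha hw hm h, sq_nonneg ‖∫ z, b z ∂μ‖]

variable [MeasurableSpace E] [BorelSpace E] [SecondCountableTopology E] [IsProbabilityMeasure μ]
  {X W : Z → E} {v : Z → ℝ}

lemma integrable_abs_inner_sub {r s : ℝ} (hX : Measurable X) (hW : Measurable W)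
    (hXr : ∀ᵐ z ∂μ, ‖X z‖ ≤ r) (hWs : ∀ᵐ z ∂μ, ‖W z‖ ≤ s) :
    Integrable (fun p : Z × Z => |⟪X p.2, W p.1 - W p.2⟫_ℝ|) (μ.prod μ) := by
  have iX : Integrable X μ := .of_bound hX.aestronglyMeasurable r hXr
  have iW : Integrable W μ := .of_bound hW.aestronglyMeasurable s hWs
  have iWX : Integrable (fun z => ⟪X z, W z⟫_ℝ) μ := by
    refine .of_bound (hX.inner hW).aestronglyMeasurable (r * s) ?_
    filter_upwards [hXr, hWs] with z hXz hWz
    exact (norm_inner_le_norm _ _).trans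
      (mul_le_mul hXz hWz (norm_nonneg _) ((norm_nonneg _).trans hXz))
  refine ((integrable_inner_prod iW iX).sub (iWX.comp_snd μ)).abs.congr (.of_forall fun p => ?_)
  simp only [Pi.sub_apply, inner_sub_right, real_inner_comm]

variable [CompleteSpace E]

lemma integral_abs_inner_sub_le_one_of_inner_nonneg (hX : Measurable X) (hW : Measurable W)
    (hres : ∀ᵐ z ∂μ, IsResponse (X z) (v z) (W z)) (h0 : ∀ᵐ z ∂μ, 0 ≤ ⟪X z, W z⟫_ℝ)
    (hmono : ∀ᵐ p ∂μ.prod μ, ‖W p.1 - W p.2‖ ^ 2 ≤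
      ⟪v p.1 • X p.1 - v p.2 • X p.2, W p.1 - W p.2⟫_ℝ) :
    ∫ p : Z × Z, |⟪X p.2, W p.1 - W p.2⟫_ℝ| ∂μ.prod μ ≤ 1 := by
  set F : Z × Z → ℝ := fun p => |⟪X p.2, W p.1 - W p.2⟫_ℝ|
  have hXn : ∀ᵐ z ∂μ, ‖X z‖ ≤ 1 := hres.mono fun z hz => hz.norm_dir_le_one
  have hWn : ∀ᵐ z ∂μ, ‖W z‖ ≤ 1 := (hres.and h0).mono fun z hz => hz.1.norm_le_one hz.2
  have hXi : Integrable X μ := .of_bound hX.aestronglyMeasurable 1 hXn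
  have hWi : Integrable W μ := .of_bound hW.aestronglyMeasurable 1 hWn
  have htX : Integrable (fun z => ⟪X z, W z⟫_ℝ • X z) μ := by
    refine hXi.bdd_smul 1 (hX.inner hW).aestronglyMeasurable ?_
    filter_upwards [hres, h0] with z hz hz0
    exact (Real.norm_of_nonneg hz0).trans_le (hz.inner_le_one hz0)
  have hm : Integrable (fun z => ‖transverse (X z) (W z)‖) μ := (hWi.sub htX).norm
  have hmX : Integrable (fun z => ‖transverse (X z) (W z)‖ • X z) μ :=
    hm.smul_bdd 1 hX.aestronglyMeasurable hXn
  have hF : Integrable F (μ.prod μ) := integrable_abs_inner_sub hX hW hXn hWn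
  have hk := integrable_influenceKernel htX hmX hWi hm
  have hk0 := integral_influenceKernel_nonneg htX hmX hWi hm (.of_forall fun z => le_rfl)
  have hle := integral_mono_ae (hF.add hF.swap) ((integrable_const 2).sub hk) <| by
    filter_upwards [Measure.quasiMeasurePreserving_fst.ae (hres.and h0),
      Measure.quasiMeasurePreserving_snd.ae (hres.and h0), hmono] with p hp hp' hpp
    exact hp.1.abs_inner_sub_add_le_influenceKernel hp'.1 hp.2 hp'.2 hpp
  rw [integral_add' hF hF.swap, integral_sub' (integrable_const 2) hk, integral_const,
    probReal_univ, one_smul] at hle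
  have hswap : ∫ p, (F ∘ Prod.swap) p ∂μ.prod μ = ∫ p, F p ∂μ.prod μ := integral_prod_swap F
  linarith

theorem integral_abs_inner_sub_le_one (hX : Measurable X) (hW : Measurable W)
    (hres : ∀ᵐ z ∂μ, IsResponse (X z) (v z) (W z))
    (hmono : ∀ᵐ p ∂μ.prod μ, ‖W p.1 - W p.2‖ ^ 2 ≤
      ⟪v p.1 • X p.1 - v p.2 • X p.2, W p.1 - W p.2⟫_ℝ) :
    ∫ p : Z × Z, |⟪X p.2, W p.1 - W p.2⟫_ℝ| ∂μ.prod μ ≤ 1 := by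
  obtain ⟨v', hv'⟩ := (hres.mono fun z hz => hz.exists_alignTo).choice
  have halign : ∀ p : Z × Z, |⟪X p.2, W p.1 - W p.2⟫_ℝ|
      = |⟪alignTo (X p.2) (W p.2), W p.1 - W p.2⟫_ℝ| := fun p =>
    (abs_inner_alignTo (X p.2) (W p.2) _).symm
  rw [integral_congr_ae (.of_forall halign)]
  refine integral_abs_inner_sub_le_one_of_inner_nonneg (v := v') (measurable_alignTo hX hW) hW
    (hv'.mono fun z hz => hz.1) (.of_forall fun z => inner_alignTo_nonneg _ _) ?_
  filter_upwards [hmono, Measure.quasiMeasurePreserving_fst.ae hv',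
    Measure.quasiMeasurePreserving_snd.ae hv'] with p hp h1 h2
  rwa [h1.2, h2.2]

end MeanInfluence

section Multiplier

lemma convex_setOf_snd_lt_neg_abs : Convex ℝ {p : ℝ × ℝ | p.2 < -|p.1|} := by
  have hconc : ConcaveOn ℝ Set.univ fun r : ℝ => -|r| := (convexOn_univ_norm (E := ℝ)).neg
  simpa using hconc.convex_strict_hypograph

lemma abs_le_of_forall_lt_neg_abs {a b c : ℝ} (h : ∀ r y, y < -|r| → r * a + y * b < c) :
    |a| ≤ b := by
  have hslope {d : ℝ} (hd : ∀ k ≥ 0, k * d - b < c) : d ≤ 0 := by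
    by_contra! hpos
    have hk := hd (|b + c| / d) (by positivity)
    rw [div_mul_cancel₀ _ hpos.ne'] at hk
    linarith [le_abs_self (b + c)]
  refine abs_le'.2 ⟨sub_nonpos.1 (hslope fun k hk => ?_), sub_nonpos.1 (hslope fun k hk => ?_)⟩
  · linarith [h k (-(k + 1)) (by rw [abs_of_nonneg hk]; linarith)]
  · linarith [h (-k) (-(k + 1)) (by rw [abs_neg, abs_of_nonneg hk]; linarith)]

lemma nonneg_of_forall_lt_neg_abs {a b c : ℝ} (h : ∀ r y, y < -|r| → r * a + y * b < c) :
    0 ≤ c := by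
  have hb : 0 ≤ b := (abs_nonneg a).trans (abs_le_of_forall_lt_neg_abs h)
  by_contra! hc
  have hlt := h 0 (c / (b + 1)) (by simpa using div_neg_of_neg_of_pos hc (by linarith))
  rw [zero_mul, zero_add, div_mul_eq_mul_div, div_lt_iff₀ (by linarith)] at hlt
  linarith

lemma exists_mul_le_of_neg_abs_le {E : Type*} [AddCommGroup E] [Module ℝ E] {A : E → ℝ}
    (hA : ConvexOn ℝ Set.univ A) (τ : E →ₗ[ℝ] ℝ) (hτ : ∀ u, -|τ u| ≤ A u) :
    ∃ v : ℝ, |v| ≤ 1 ∧ ∀ u, v * τ u ≤ A u := by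
  obtain ⟨f, c, hfs, hft⟩ := geometric_hahn_banach_open convex_setOf_snd_lt_neg_abs
    (isOpen_lt continuous_snd continuous_fst.abs.neg)
    (hA.convex_epigraph.linear_image (τ.prodMap .id))
    (Set.disjoint_left.2 <| by
      rintro _ hlt ⟨⟨u, y⟩, ⟨-, hle⟩, rfl⟩
      exact absurd ((hτ u).trans hle) (not_le.2 hlt))
  have hf (r y : ℝ) : f (r, y) = r * f (1, 0) + y * f (0, 1) := by
    rw [← smul_eq_mul, ← smul_eq_mul, ← map_smul, ← map_smul, ← map_add]
    simp
  have hlt (r y : ℝ) (h : y < -|r|) : r * f (1, 0) + y * f (0, 1) < c := hf r y ▸ hfs (r, y) h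
  have hle (u : E) : c ≤ τ u * f (1, 0) + A u * f (0, 1) :=
    hf .. ▸ hft _ ⟨(u, A u), ⟨trivial, le_rfl⟩, rfl⟩
  have hab := abs_le_of_forall_lt_neg_abs hlt
  have hc0 := nonneg_of_forall_lt_neg_abs hlt
  set a := f (1, 0)
  set b := f (0, 1)
  have hb : 0 < b := by
    refine ((abs_nonneg a).trans hab).lt_of_ne' fun hb => ?_
    have ha : a = 0 := abs_nonpos_iff.1 (hb ▸ hab)
    have hc_pos := hlt 0 (-1) (by simp)
    have hc_nonpos := hle 0
    simp only [ha, hb, mul_zero, add_zero] at hc_pos hc_nonpos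
    exact hc_pos.not_ge hc_nonpos
  refine ⟨-a / b, ?_, fun u => ?_⟩
  · rwa [abs_div, abs_neg, abs_of_pos hb, div_le_one hb]
  · rw [div_mul_eq_mul_div, div_le_iff₀ hb]
    linarith [hle u]

end Multiplier

section StrongConvexity

variable {E : Type*} [NormedAddCommGroup E]

lemma add_sq_norm_sub_le_of_isMinOn [NormedSpace ℝ E] {s : Set E} {f : E → ℝ} {c : ℝ} {u w : E}
    (hf : StrongConvexOn s c f) (hmin : IsMinOn f s w) (hw : w ∈ s) (hu : u ∈ s) :
    f w + c / 2 * ‖u - w‖ ^ 2 ≤ f u := by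
  have hslope (a : ℝ) (ha : a ∈ Set.Ioo 0 1) : a * (c / 2 * ‖u - w‖ ^ 2) ≤ f u - f w := by
    have hconv := hf.2 hu hw (sub_nonneg.2 ha.2.le) ha.1.le (sub_add_cancel 1 a)
    have hle := hmin (hf.1 hu hw (sub_nonneg.2 ha.2.le) ha.1.le (sub_add_cancel 1 a))
    simp only [Set.mem_ofPred_eq, smul_eq_mul] at hconv hle
    refine le_of_mul_le_mul_left ?_ (sub_pos.2 ha.2)
    linarith
  have hlim : Filter.Tendsto (fun a : ℝ => a * (c / 2 * ‖u - w‖ ^ 2)) (nhdsWithin 1 (Set.Iio 1))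
      (nhds (1 * (c / 2 * ‖u - w‖ ^ 2))) :=
    (Filter.tendsto_id.mono_left nhdsWithin_le_nhds).mul_const _
  linarith [le_of_tendsto hlim (Filter.mem_of_superset (Ioo_mem_nhdsLT zero_lt_one) hslope)]

lemma exists_forall_le_of_strongConvexOn [NormedSpace ℝ E] [CompleteSpace E] {f : E → ℝ} {c : ℝ}
    (hf : StrongConvexOn Set.univ c f) (hc : 0 < c) (hcont : Continuous f)
    (hbdd : BddBelow (Set.range f)) : ∃ w, ∀ u, f w ≤ f u := by
  set m := ⨅ u, f u
  have hle (u : E) : m ≤ f u := ciInf_le hbdd u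
  have hdist (u v : E) : c * ‖u - v‖ ^ 2 ≤ 4 * (f u - m + (f v - m)) := by
    have hmid := hf.2 (Set.mem_univ u) (Set.mem_univ v) one_half_pos.le one_half_pos.le
      (add_halves 1)
    simp only [smul_eq_mul] at hmid
    linarith [hle ((1 / 2 : ℝ) • u + (1 / 2 : ℝ) • v)]
  have hne : (Filter.comap f (nhds m)).NeBot := Filter.comap_neBot fun t ht => by
    obtain ⟨_, hut, u, rfl⟩ :=
      mem_closure_iff_nhds.1 (csInf_mem_closure (Set.range_nonempty f) hbdd) t ht
    exact ⟨u, hut⟩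
  have hcauchy : Cauchy (Filter.comap f (nhds m)) := by
    refine Metric.cauchy_iff.2 ⟨hne, fun ε hε => ⟨f ⁻¹' Set.Iio (m + c * ε ^ 2 / 8),
      Filter.preimage_mem_comap (Iio_mem_nhds (by linarith [show 0 < c * ε ^ 2 by positivity])),
      fun u hu v hv => ?_⟩⟩
    rw [Set.mem_preimage, Set.mem_Iio] at hu hv
    rw [dist_eq_norm]
    refine lt_of_pow_lt_pow_left₀ 2 hε.le (lt_of_mul_lt_mul_left ?_ hc.le)
    linarith [hdist u v]
  obtain ⟨w, hw⟩ := CompleteSpace.complete hcauchy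
  have hfw : f w = m :=
    tendsto_nhds_unique ((hcont.tendsto w).mono_left hw) Filter.tendsto_comap
  exact ⟨w, fun u => hfw ▸ hle u⟩

variable [InnerProductSpace ℝ E]

lemma strongConvexOn_iff_convexOn_sub_sq_norm_sub {s : Set E} {f : E → ℝ} {c : ℝ} (h : E) :
    StrongConvexOn s c f ↔ ConvexOn ℝ s fun w => f w - c / 2 * ‖w - h‖ ^ 2 := by
  have hexpand (w : E) : ‖w - h‖ ^ 2 = ‖w‖ ^ 2 - 2 * ⟪h, w⟫_ℝ + ‖h‖ ^ 2 := by
    rw [norm_sub_sq_real, real_inner_comm]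
  have haffine (a b : ℝ) (hs : Convex ℝ s) : ConvexOn ℝ s fun w => a * ⟪h, w⟫_ℝ + b :=
    ((a • innerₗ E h).convexOn hs).add_const b
  rw [strongConvexOn_iff_convex]
  constructor <;> intro hf
  · refine (hf.add (haffine c (-(c / 2 * ‖h‖ ^ 2)) hf.1)).congr fun w _ => ?_
    rw [Pi.add_apply, hexpand]
    ring
  · refine (hf.add (haffine (-c) (c / 2 * ‖h‖ ^ 2) hf.1)).congr fun w _ => ?_
    rw [Pi.add_apply, hexpand]
    ring

/-- `g` is a subgradient of the `c`-strongly convex function `f` at `w`: the affine minorant that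
`g` defines is improved by the quadratic term which strong convexity provides. -/
def IsStrongSubgradient (f : E → ℝ) (c : ℝ) (g w : E) : Prop :=
  ∀ u, f w + ⟪g, u - w⟫_ℝ + c / 2 * ‖u - w‖ ^ 2 ≤ f u

lemma isStrongSubgradient_zero {f : E → ℝ} {c : ℝ} {w : E} (hf : StrongConvexOn Set.univ c f)
    (hmin : ∀ u, f w ≤ f u) : IsStrongSubgradient f c 0 w := fun u => by
  rw [inner_zero_left, add_zero]
  exact add_sq_norm_sub_le_of_isMinOn hf (fun u _ => hmin u) trivial trivial

lemma IsStrongSubgradient.mul_sq_norm_sub_le {f : E → ℝ} {c : ℝ} {g g' w w' : E}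
    (hg : IsStrongSubgradient f c g w) (hg' : IsStrongSubgradient f c g' w') :
    c * ‖w - w'‖ ^ 2 ≤ ⟪g - g', w - w'⟫_ℝ := by
  have h := hg w'
  have h' := hg' w
  rw [norm_sub_rev, ← neg_sub w w', inner_neg_right] at h
  rw [inner_sub_left]
  linarith

lemma exists_isStrongSubgradient_smul {G φ : E → ℝ} {c : ℝ} {ξ w : E}
    (hG : StrongConvexOn Set.univ c G) (hφ : ConvexOn ℝ Set.univ φ)
    (hlip : ∀ u, φ u - φ w ≤ |⟪ξ, u - w⟫_ℝ|) (hmin : ∀ u, φ w + G w ≤ φ u + G u) :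
    ∃ v : ℝ, |v| ≤ 1 ∧ IsStrongSubgradient G c (v • ξ) w := by
  rw [strongConvexOn_iff_convexOn_sub_sq_norm_sub w] at hG
  have hsum : StrongConvexOn Set.univ c (φ + G) :=
    (strongConvexOn_iff_convexOn_sub_sq_norm_sub w).2 <|
      (hφ.add hG).congr fun u _ => (add_sub_assoc ..).symm
  have hconv : ConvexOn ℝ Set.univ fun u => G (w + u) - c / 2 * ‖u‖ ^ 2 - G w :=
    ((hG.translate_right w).add_const (-G w)).congr fun u _ => by simp [sub_eq_add_neg]
  have hgrowth (u : E) : -|⟪ξ, u⟫_ℝ| ≤ G (w + u) - c / 2 * ‖u‖ ^ 2 - G w := by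
    have hle := hlip (w + u)
    have hadd := add_sq_norm_sub_le_of_isMinOn hsum (fun u _ => hmin u) trivial
      (Set.mem_univ (w + u))
    simp only [Pi.add_apply, add_sub_cancel_left] at hle hadd
    linarith
  obtain ⟨v, hv, hle⟩ := exists_mul_le_of_neg_abs_le hconv (innerₗ E ξ) hgrowth
  refine ⟨v, hv, fun u => ?_⟩
  have := hle (u - w)
  rw [innerₗ_apply_apply, ← real_inner_smul_left, add_sub_cancel] at this
  linarith

end StrongConvexity

section RidgeLoss

variable {E : Type*} [NormedAddCommGroup E]

lemma continuous_of_abs_sub_le {f : E → ℝ} {ρ : ℝ} (hf : ∀ u w, |f u - f w| ≤ ρ * ‖u - w‖) :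
    Continuous f :=
  (LipschitzWith.of_dist_le' fun u w => by
    rw [Real.dist_eq, dist_eq_norm]
    exact hf u w).continuous

variable [InnerProductSpace ℝ E]

/-- `f` is a nonnegative convex loss that varies only along the direction `x`, at a rate bounded by
that of the functional `⟪x, ·⟫`. The loss `w ↦ ℓ(⟪x, w⟫, y)` of an `L`-Lipschitz `ℓ` is a ridge
loss along `L • x`. -/
structure IsRidgeLoss (f : E → ℝ) (x : E) : Prop where
  nonneg (w : E) : 0 ≤ f w
  convexOn : ConvexOn ℝ Set.univ f
  abs_sub_le (u w : E) : |f u - f w| ≤ |⟪x, u - w⟫_ℝ|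

namespace IsRidgeLoss

variable {f : E → ℝ} {x : E}

lemma of_convexOn_lipschitz {g : ℝ → ℝ} {L : ℝ} (hg0 : ∀ a, 0 ≤ g a)
    (hconv : ConvexOn ℝ Set.univ g) (hlip : ∀ a b, |g a - g b| ≤ L * |a - b|) (x : E) :
    IsRidgeLoss (fun w => g ⟪x, w⟫_ℝ) (L • x) where
  nonneg w := hg0 _
  convexOn := hconv.comp_linearMap (innerₗ E x)
  abs_sub_le u w := by
    rw [real_inner_smul_left, abs_mul, inner_sub_right]
    exact (hlip _ _).trans (mul_le_mul_of_nonneg_right (le_abs_self L) (abs_nonneg _))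

lemma const_mul (hf : IsRidgeLoss f x) {a : ℝ} (ha : 0 ≤ a) :
    IsRidgeLoss (fun w => a * f w) (a • x) where
  nonneg w := mul_nonneg ha (hf.nonneg w)
  convexOn := hf.convexOn.smul ha
  abs_sub_le u w := by
    rw [← mul_sub, real_inner_smul_left, abs_mul, abs_mul]
    exact mul_le_mul_of_nonneg_left (hf.abs_sub_le u w) (abs_nonneg a)

lemma abs_sub_le_norm (hf : IsRidgeLoss f x) {ρ : ℝ} (hx : ‖x‖ ≤ ρ) (u w : E) :
    |f u - f w| ≤ ρ * ‖u - w‖ :=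
  (hf.abs_sub_le u w).trans <| (abs_real_inner_le_norm x _).trans <|
    mul_le_mul_of_nonneg_right hx (norm_nonneg _)

lemma continuous (hf : IsRidgeLoss f x) : Continuous f :=
  continuous_of_abs_sub_le (hf.abs_sub_le_norm le_rfl)

end IsRidgeLoss

end RidgeLoss

section MeanStability

variable {Z E : Type*} [MeasurableSpace Z] {μ : Measure Z} [NormedAddCommGroup E]
  [InnerProductSpace ℝ E]

lemma sq_norm_smul_le_inner_smul_smul {c ρ : ℝ} (hc : 0 ≤ c) {g y : E}
    (hle : c * ‖y‖ ^ 2 ≤ ⟪g, y⟫_ℝ) :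
    ‖(c / ρ) • y‖ ^ 2 ≤ ⟪ρ⁻¹ • g, (c / ρ) • y⟫_ℝ := by
  rw [real_inner_smul_left, real_inner_smul_right, norm_smul, mul_pow, Real.norm_eq_abs, sq_abs]
  have hmul := mul_le_mul_of_nonneg_left hle (show 0 ≤ c / ρ ^ 2 by positivity)
  calc (c / ρ) ^ 2 * ‖y‖ ^ 2 = c / ρ ^ 2 * (c * ‖y‖ ^ 2) := by ring
    _ ≤ c / ρ ^ 2 * ⟪g, y⟫_ℝ := hmul
    _ = ρ⁻¹ * (c / ρ * ⟪g, y⟫_ℝ) := by ring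

lemma IsStrongSubgradient.isResponse {G : E → ℝ} {c ρ v : ℝ} {ξ w w₀ : E}
    (hw : IsStrongSubgradient G c (v • ξ) w) (hw₀ : IsStrongSubgradient G c 0 w₀) (hc : 0 ≤ c)
    (hρ : 0 < ρ) (hξ : ‖ξ‖ ≤ ρ) (hv : |v| ≤ 1) :
    IsResponse (ρ⁻¹ • ξ) v ((c / ρ) • (w - w₀)) where
  norm_dir_le_one := by
    rwa [norm_smul, Real.norm_of_nonneg (by positivity), inv_mul_le_iff₀ hρ, mul_one]
  abs_coeff_le_one := hv
  sq_norm_le := by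
    rw [← real_inner_smul_left, smul_comm]
    exact sq_norm_smul_le_inner_smul_smul hc (by simpa using hw.mul_sq_norm_sub_le hw₀)

variable [MeasurableSpace E] [BorelSpace E] [SecondCountableTopology E] [IsProbabilityMeasure μ]
  [CompleteSpace E]

theorem integral_abs_inner_sub_le_of_isStrongSubgradient {G : E → ℝ} {ξ W : Z → E} {v : Z → ℝ}
    {c ρ : ℝ} {w₀ : E} (hc : 0 < c) (hw₀ : IsStrongSubgradient G c 0 w₀)
    (hξ : Measurable ξ) (hW : Measurable W) (hρ : ∀ᵐ z ∂μ, ‖ξ z‖ ≤ ρ)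
    (hv : ∀ᵐ z ∂μ, |v z| ≤ 1 ∧ IsStrongSubgradient G c (v z • ξ z) (W z)) :
    ∫ p : Z × Z, |⟪ξ p.2, W p.1 - W p.2⟫_ℝ| ∂μ.prod μ ≤ ρ ^ 2 / c := by
  obtain ⟨z₀, hz₀⟩ := hρ.exists
  rcases ((norm_nonneg _).trans hz₀).eq_or_lt' with rfl | hρ0
  · have hzero : ∀ᵐ p ∂μ.prod μ, |⟪ξ p.2, W p.1 - W p.2⟫_ℝ| = 0 := by
      filter_upwards [Measure.quasiMeasurePreserving_snd.ae hρ] with p hp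
      rw [norm_le_zero_iff.1 hp, inner_zero_left, abs_zero]
    simp [integral_eq_zero_of_ae hzero]
  have hdiff (z z' : Z) :
      (c / ρ) • (W z - w₀) - (c / ρ) • (W z' - w₀) = (c / ρ) • (W z - W z') := by
    rw [← smul_sub, sub_sub_sub_cancel_right]
  have hle := integral_abs_inner_sub_le_one (X := fun z => ρ⁻¹ • ξ z)
    (W := fun z => (c / ρ) • (W z - w₀)) (hξ.const_smul _) ((hW.sub_const w₀).const_smul _)
    (by filter_upwards [hρ, hv] with z hz hvz using hvz.2.isResponse hw₀ hc.le hρ0 hz hvz.1)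
    (by
      filter_upwards [Measure.quasiMeasurePreserving_fst.ae hv,
        Measure.quasiMeasurePreserving_snd.ae hv] with p hp hp'
      rw [hdiff, smul_comm, smul_comm (v p.2), ← smul_sub]
      exact sq_norm_smul_le_inner_smul_smul hc.le (hp.2.mul_sq_norm_sub_le hp'.2))
  have hscale (p : Z × Z) : |⟪ρ⁻¹ • ξ p.2, (c / ρ) • (W p.1 - w₀) - (c / ρ) • (W p.2 - w₀)⟫_ℝ|
      = c / ρ ^ 2 * |⟪ξ p.2, W p.1 - W p.2⟫_ℝ| := by
    rw [hdiff, real_inner_smul_left, real_inner_smul_right, ← mul_assoc, abs_mul,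
      abs_of_pos (by positivity)]
    ring
  simp only [hscale, integral_const_mul] at hle
  rwa [div_mul_eq_mul_div, div_le_one (by positivity), ← le_div_iff₀' hc] at hle

theorem integral_abs_inner_sub_le_of_isRidgeLoss {G : E → ℝ} {φ : Z → E → ℝ} {ξ W : Z → E}
    {c ρ : ℝ} {w₀ : E} (hG : StrongConvexOn Set.univ c G) (hc : 0 < c) (hw₀ : ∀ u, G w₀ ≤ G u)
    (hξ : Measurable ξ) (hW : Measurable W) (hρ : ∀ᵐ z ∂μ, ‖ξ z‖ ≤ ρ)
    (hφ : ∀ᵐ z ∂μ, IsRidgeLoss (φ z) (ξ z))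
    (hmin : ∀ᵐ z ∂μ, ∀ u, φ z (W z) + G (W z) ≤ φ z u + G u) :
    ∫ p : Z × Z, |⟪ξ p.2, W p.1 - W p.2⟫_ℝ| ∂μ.prod μ ≤ ρ ^ 2 / c := by
  have hex : ∀ᵐ z ∂μ, ∃ v : ℝ, |v| ≤ 1 ∧ IsStrongSubgradient G c (v • ξ z) (W z) := by
    filter_upwards [hφ, hmin] with z hz hminz
    exact exists_isStrongSubgradient_smul hG hz.convexOn
      (fun u => (le_abs_self _).trans (hz.abs_sub_le u _)) hminz
  obtain ⟨v, hv⟩ := hex.choice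
  exact integral_abs_inner_sub_le_of_isStrongSubgradient hc (isStrongSubgradient_zero hG hw₀) hξ hW
    hρ hv

end MeanStability

section ReplaceOne

variable {Z : Type*} [MeasurableSpace Z] {m : ℕ}

lemma ae_pi_forall {ι : Type*} [Fintype ι] {μ : Measure Z} [SigmaFinite μ] {p : Z → Prop}
    (hp : ∀ᵐ z ∂μ, p z) : ∀ᵐ S ∂Measure.pi fun _ : ι => μ, ∀ i, p (S i) :=
  ae_all_iff.2 fun i => (Measure.quasiMeasurePreserving_eval (fun _ : ι => μ) i).ae hp

/-- Groups the `k`-th entry of a sample with a further example: `(z, S)` corresponds to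
`((z, S k), C)`, where `C` is `S` without its `k`-th entry. -/
def pairEquiv (k : Fin (m + 1)) : Z × (Fin (m + 1) → Z) ≃ᵐ (Z × Z) × (Fin m → Z) :=
  ((MeasurableEquiv.refl Z).prodCongr (MeasurableEquiv.piFinSuccAbove (fun _ => Z) k)).trans
    MeasurableEquiv.prodAssoc.symm

/-- Exchanges the `k`-th entry of a sample with a further example. -/
def replaceOne (k : Fin (m + 1)) : Z × (Fin (m + 1) → Z) ≃ᵐ Z × (Fin (m + 1) → Z) :=
  (pairEquiv k).trans <|
    (MeasurableEquiv.prodComm.prodCongr (MeasurableEquiv.refl _)).trans (pairEquiv k).symm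

lemma replaceOne_apply (k : Fin (m + 1)) (p : Z × (Fin (m + 1) → Z)) :
    replaceOne k p = (p.2 k, Function.update p.2 k p.1) := by
  change (p.2 k, k.insertNth p.1 (k.removeNth p.2)) = _
  rw [Fin.insertNth_removeNth]

variable (μ : Measure Z)

lemma measurePreserving_pairEquiv [SigmaFinite μ] (k : Fin (m + 1)) :
    MeasurePreserving (pairEquiv k) (μ.prod (Measure.pi fun _ => μ))
      ((μ.prod μ).prod (Measure.pi fun _ => μ)) :=
  ((MeasurePreserving.id μ).prod (measurePreserving_piFinSuccAbove (fun _ => μ) k)).trans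
    (measurePreserving_prodAssoc μ μ _).symm

lemma measurePreserving_replaceOne [SigmaFinite μ] (k : Fin (m + 1)) :
    MeasurePreserving (replaceOne k) (μ.prod (Measure.pi fun _ => μ))
      (μ.prod (Measure.pi fun _ => μ)) :=
  (measurePreserving_pairEquiv μ k).trans <|
    (Measure.measurePreserving_swap.prod (MeasurePreserving.id _)).trans
      (measurePreserving_pairEquiv μ k).symm

variable {μ} [IsProbabilityMeasure μ] {f e : Z × (Fin (m + 1) → Z) → ℝ} {B : ℝ}

lemma integral_prod_pi_le_of_forall_insertNth {k : Fin (m + 1)}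
    (hf : Integrable f (μ.prod (Measure.pi fun _ => μ)))
    (hle : ∀ᵐ C ∂Measure.pi fun _ : Fin m => μ,
      ∫ p : Z × Z, f (p.1, k.insertNth p.2 C) ∂μ.prod μ ≤ B) :
    ∫ p, f p ∂μ.prod (Measure.pi fun _ => μ) ≤ B := by
  have he := (measurePreserving_pairEquiv μ k).symm
  have hfe : Integrable (fun q => f ((pairEquiv k).symm q)) _ := he.integrable_comp_of_integrable hf
  rw [← he.integral_comp', integral_prod_symm _ hfe]
  simpa using integral_mono_ae hfe.integral_prod_right (integrable_const B) hle

lemma integral_le_integral_add_of_sum_replaceOne_le {g : Fin (m + 1) → Z × (Fin (m + 1) → Z) → ℝ}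
    (hf : Integrable f (μ.prod (Measure.pi fun _ => μ)))
    (he : Integrable e (μ.prod (Measure.pi fun _ => μ)))
    (hg : ∀ k, Integrable (g k) (μ.prod (Measure.pi fun _ => μ)))
    (hgB : ∀ k, ∫ p, g k p ∂μ.prod (Measure.pi fun _ => μ) ≤ B)
    (hle : ∀ᵐ p ∂μ.prod (Measure.pi fun _ => μ),
      ∑ k, f (replaceOne k p) ≤ (m + 1 : ℕ) * e p + ∑ k, g k p) :
    ∫ p, f p ∂μ.prod (Measure.pi fun _ => μ) ≤ ∫ p, e p ∂μ.prod (Measure.pi fun _ => μ) + B := by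
  have hfk (k : Fin (m + 1)) : Integrable (fun p => f (replaceOne k p)) _ :=
    (measurePreserving_replaceOne μ k).integrable_comp_of_integrable hf
  have hsum := integral_mono_ae (integrable_finsetSum _ fun k _ => hfk k)
    ((he.const_mul _).fun_add (integrable_finsetSum _ fun k _ => hg k)) hle
  rw [integral_finsetSum _ fun k _ => hfk k, integral_add (he.const_mul _)
    (integrable_finsetSum _ fun k _ => hg k), integral_finsetSum _ fun k _ => hg k,
    integral_const_mul,
    Finset.sum_congr rfl fun k _ => (measurePreserving_replaceOne μ k).integral_comp' f] at hsum
  have hB := Finset.sum_le_card_nsmul Finset.univ _ B fun k _ => hgB k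
  simp only [Finset.sum_const, Finset.card_univ, Fintype.card_fin, nsmul_eq_mul] at hsum hB
  refine le_of_mul_le_mul_left (a := ((m + 1 : ℕ) : ℝ)) ?_ (by positivity)
  linarith

end ReplaceOne

section BiasedERM

variable {Z E : Type*} {φ : Z → E → ℝ}

/-- Empirical risk of the predictor `w` on the sample `S`, where `φ z w` is the loss of `w` on the
example `z`. -/
def empiricalRisk {n : ℕ} (φ : Z → E → ℝ) (S : Fin n → Z) (w : E) : ℝ :=
  (n : ℝ)⁻¹ * ∑ k, φ (S k) w

lemma empiricalRisk_sub_le_of_forall_sub_le {m : ℕ} {S : Fin (m + 1) → Z} {u w : E} {B : ℝ}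
    (hB : ∀ k, φ (S k) u - φ (S k) w ≤ B) :
    empiricalRisk φ S u - empiricalRisk φ S w ≤ B := by
  rw [empiricalRisk, empiricalRisk, ← mul_sub, ← Finset.sum_sub_distrib,
    inv_mul_le_iff₀ (by positivity)]
  simpa using Finset.sum_le_card_nsmul Finset.univ _ B fun k _ => hB k

variable [NormedAddCommGroup E] {lam : ℝ} {h : E}

/-- Empirical risk regularized by the squared distance to the bias `h`, with weight `lam / 2`; its
minimizer is the biased ERM. -/
def biasedRisk {n : ℕ} (φ : Z → E → ℝ) (lam : ℝ) (h : E) (S : Fin n → Z) (w : E) : ℝ :=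
  empiricalRisk φ S w + lam / 2 * ‖w - h‖ ^ 2

lemma biasedRisk_insertNth {m : ℕ} (k : Fin (m + 1)) (z : Z) (C : Fin m → Z) (w : E) :
    biasedRisk φ lam h (k.insertNth z C : Fin (m + 1) → Z) w
      = ((m + 1 : ℕ) : ℝ)⁻¹ * φ z w
        + (((m + 1 : ℕ) : ℝ)⁻¹ * ∑ j, φ (C j) w + lam / 2 * ‖w - h‖ ^ 2) := by
  rw [biasedRisk, empiricalRisk, Fin.sum_univ_succAbove _ k]
  simp only [Fin.insertNth_apply_same, Fin.insertNth_apply_succAbove]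
  ring

variable [InnerProductSpace ℝ E]

lemma strongConvexOn_add_sq_norm_sub {F : E → ℝ} (hF : ConvexOn ℝ Set.univ F) (lam : ℝ) (h : E) :
    StrongConvexOn Set.univ lam fun w => F w + lam / 2 * ‖w - h‖ ^ 2 :=
  (strongConvexOn_iff_convexOn_sub_sq_norm_sub h).2 <|
    hF.congr fun _ _ => (add_sub_cancel_right _ _).symm

lemma exists_forall_add_sq_norm_sub_le [CompleteSpace E] {F : E → ℝ} (hlam : 0 < lam)
    (hF : ConvexOn ℝ Set.univ F) (hcont : Continuous F) (h0 : ∀ w, 0 ≤ F w) (h : E) :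
    ∃ w, ∀ u, F w + lam / 2 * ‖w - h‖ ^ 2 ≤ F u + lam / 2 * ‖u - h‖ ^ 2 := by
  refine exists_forall_le_of_strongConvexOn (strongConvexOn_add_sq_norm_sub hF lam h) hlam
    (by fun_prop) ⟨0, Set.forall_mem_range.2 fun w => ?_⟩
  have := h0 w
  positivity

variable {ξ : Z → E} {ρ : ℝ} {m : ℕ}

lemma convexOn_sum_of_isRidgeLoss {C : Fin m → Z} (hC : ∀ j, IsRidgeLoss (φ (C j)) (ξ (C j))) :
    ConvexOn ℝ Set.univ fun w => ∑ j, φ (C j) w :=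
  (Finset.univ.sum_induction (fun j => φ (C j)) (ConvexOn ℝ Set.univ) (fun _ _ => ConvexOn.add)
    (convexOn_const 0 convex_univ) fun j _ => (hC j).convexOn).congr fun w _ =>
      Finset.sum_apply w _ _

lemma norm_sub_le_of_forall_biasedRisk_le {S : Fin (m + 1) → Z} {w : E} (hlam : 0 < lam)
    (hφ : ∀ k, IsRidgeLoss (φ (S k)) (ξ (S k))) (hρ : ∀ k, ‖ξ (S k)‖ ≤ ρ)
    (hw : biasedRisk φ lam h S w ≤ biasedRisk φ lam h S h) : ‖w - h‖ ≤ 2 * ρ / lam := by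
  have hlip := empiricalRisk_sub_le_of_forall_sub_le fun k =>
    (le_abs_self _).trans ((hφ k).abs_sub_le_norm (hρ k) h w)
  simp only [biasedRisk, sub_self, norm_zero, norm_sub_rev h w] at hw hlip
  have hsq : ‖w - h‖ * (lam * ‖w - h‖) ≤ ‖w - h‖ * (2 * ρ) := by linarith
  rcases (norm_nonneg (w - h)).eq_or_lt' with h0 | hpos
  · have := (norm_nonneg _).trans (hρ 0)
    rw [h0]
    positivity
  · exact (le_div_iff₀' hlam).2 (le_of_mul_le_mul_left hsq hpos)

variable [MeasurableSpace Z] {μ : Measure Z} [IsProbabilityMeasure μ]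
  {erm : (Fin (m + 1) → Z) → E}

lemma ae_norm_erm_sub_le (hlam : 0 < lam) (hφ : ∀ᵐ z ∂μ, IsRidgeLoss (φ z) (ξ z))
    (hρ : ∀ᵐ z ∂μ, ‖ξ z‖ ≤ ρ)
    (herm : ∀ S w, biasedRisk φ lam h S (erm S) ≤ biasedRisk φ lam h S w) :
    ∀ᵐ S ∂Measure.pi fun _ => μ, ‖erm S - h‖ ≤ 2 * ρ / lam := by
  filter_upwards [ae_pi_forall hφ, ae_pi_forall hρ] with S hS hSρ
  exact norm_sub_le_of_forall_biasedRisk_le hlam hS hSρ (herm S h)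

/-- Bound on the increase of the loss on the `k`-th training example of the sample `p.2` when that
example is replaced by `p.1`, for losses that are `1`-Lipschitz along `ξ`. -/
def replaceOneGap (ξ : Z → E) (erm : (Fin (m + 1) → Z) → E) (k : Fin (m + 1))
    (p : Z × (Fin (m + 1) → Z)) : ℝ :=
  |⟪ξ (p.2 k), erm (replaceOne k p).2 - erm p.2⟫_ℝ|

lemma replaceOneGap_insertNth (k : Fin (m + 1)) (z z' : Z) (C : Fin m → Z) :
    replaceOneGap ξ erm k (z, k.insertNth z' C)
      = |⟪ξ z', erm (k.insertNth z C) - erm (k.insertNth z' C)⟫_ℝ| := by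
  simp only [replaceOneGap, replaceOne_apply, Fin.insertNth_apply_same, Fin.update_insertNth]

variable [MeasurableSpace E] [BorelSpace E] [SecondCountableTopology E]

lemma integrable_replaceOneGap (hξ : Measurable ξ) (herm : Measurable erm) {r : ℝ}
    (hρ : ∀ᵐ z ∂μ, ‖ξ z‖ ≤ ρ) (hr : ∀ᵐ S ∂Measure.pi fun _ => μ, ‖erm S - h‖ ≤ r)
    (k : Fin (m + 1)) :
    Integrable (replaceOneGap ξ erm k) (μ.prod (Measure.pi fun _ => μ)) := by
  have hmeas : Measurable (replaceOneGap ξ erm k) := by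
    have := (replaceOne (Z := Z) k).measurable
    unfold replaceOneGap
    fun_prop
  have hr' := Measure.quasiMeasurePreserving_snd (μ := μ).ae hr
  refine .of_bound hmeas.aestronglyMeasurable (ρ * (r + r)) ?_
  filter_upwards [Measure.quasiMeasurePreserving_snd.ae (ae_pi_forall hρ), hr',
    (measurePreserving_replaceOne μ k).quasiMeasurePreserving.ae hr'] with p hp hS hS'
  rw [replaceOneGap, norm_abs_eq_norm, ← sub_sub_sub_cancel_right _ _ h]
  exact (norm_inner_le_norm _ _).trans <|
    mul_le_mul (hp k) ((norm_sub_le _ _).trans (add_le_add hS' hS)) (norm_nonneg _)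
      ((norm_nonneg _).trans (hp k))

variable [CompleteSpace E]

lemma integral_abs_inner_erm_insertNth_sub_le (hlam : 0 < lam) (hξ : Measurable ξ)
    (herm : Measurable erm) (hφ : ∀ᵐ z ∂μ, IsRidgeLoss (φ z) (ξ z)) (hρ : ∀ᵐ z ∂μ, ‖ξ z‖ ≤ ρ)
    (hmin : ∀ S w, biasedRisk φ lam h S (erm S) ≤ biasedRisk φ lam h S w) (k : Fin (m + 1))
    {C : Fin m → Z} (hC : ∀ j, IsRidgeLoss (φ (C j)) (ξ (C j))) :
    ∫ p : Z × Z, |⟪ξ p.2, erm (k.insertNth p.1 C) - erm (k.insertNth p.2 C)⟫_ℝ| ∂μ.prod μ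
      ≤ ρ ^ 2 / (lam * (m + 1 : ℕ)) := by
  set a : ℝ := ((m + 1 : ℕ) : ℝ)⁻¹
  have ha0 : 0 < a := by positivity
  have hconv : ConvexOn ℝ Set.univ fun w => a * ∑ j, φ (C j) w :=
    (convexOn_sum_of_isRidgeLoss hC).smul ha0.le
  have hcont : Continuous fun w => a * ∑ j, φ (C j) w :=
    continuous_const.mul (continuous_finsetSum _ fun j _ => (hC j).continuous)
  obtain ⟨w₀, hw₀⟩ := exists_forall_add_sq_norm_sub_le hlam hconv hcont
    (fun w => mul_nonneg ha0.le (Finset.sum_nonneg fun j _ => (hC j).nonneg w)) h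
  have hins : Measurable fun z => (k.insertNth z C : Fin (m + 1) → Z) :=
    (MeasurableEquiv.piFinSuccAbove (fun _ => Z) k).symm.measurable.comp measurable_prodMk_right
  have hle := integral_abs_inner_sub_le_of_isRidgeLoss (μ := μ) (φ := fun z w => a * φ z w)
    (ξ := fun z => a • ξ z) (ρ := a * ρ) (strongConvexOn_add_sq_norm_sub hconv lam h) hlam hw₀
    (hξ.const_smul a) (herm.comp hins)
    (hρ.mono fun z hz => by
      rw [norm_smul, Real.norm_of_nonneg ha0.le]
      exact mul_le_mul_of_nonneg_left hz ha0.le)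
    (hφ.mono fun z hz => hz.const_mul ha0.le)
    (.of_forall fun z u => by
      rw [Function.comp_apply, ← biasedRisk_insertNth, ← biasedRisk_insertNth]
      exact hmin _ u)
  simp only [real_inner_smul_left, abs_mul, abs_of_pos ha0, integral_const_mul,
    Function.comp_apply] at hle
  rw [mul_pow, sq a, mul_assoc, mul_div_assoc, mul_le_mul_iff_right₀ ha0] at hle
  rwa [mul_comm lam, ← div_div, div_eq_inv_mul (ρ ^ 2)]

lemma integral_replaceOneGap_le (hlam : 0 < lam) (hξ : Measurable ξ)
    (herm : Measurable erm) (hφ : ∀ᵐ z ∂μ, IsRidgeLoss (φ z) (ξ z)) (hρ : ∀ᵐ z ∂μ, ‖ξ z‖ ≤ ρ)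
    (hmin : ∀ S w, biasedRisk φ lam h S (erm S) ≤ biasedRisk φ lam h S w) (k : Fin (m + 1)) :
    ∫ p, replaceOneGap ξ erm k p ∂μ.prod (Measure.pi fun _ => μ)
      ≤ ρ ^ 2 / (lam * (m + 1 : ℕ)) := by
  refine integral_prod_pi_le_of_forall_insertNth (k := k)
    (integrable_replaceOneGap hξ herm hρ (ae_norm_erm_sub_le hlam hφ hρ hmin) k) ?_
  filter_upwards [ae_pi_forall hφ] with C hC
  simp only [replaceOneGap_insertNth]
  exact integral_abs_inner_erm_insertNth_sub_le hlam hξ herm hφ hρ hmin k hC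

theorem integral_le_integral_empiricalRisk_erm_add (hlam : 0 < lam) (hξ : Measurable ξ)
    (herm : Measurable erm) (hφ : ∀ᵐ z ∂μ, IsRidgeLoss (φ z) (ξ z)) (hρ : ∀ᵐ z ∂μ, ‖ξ z‖ ≤ ρ)
    (hmin : ∀ S w, biasedRisk φ lam h S (erm S) ≤ biasedRisk φ lam h S w)
    {f : Z × (Fin (m + 1) → Z) → ℝ} (hf : Integrable f (μ.prod (Measure.pi fun _ => μ)))
    (hfle : ∀ᵐ z ∂μ, ∀ S, f (z, S) ≤ φ z (erm S))
    (he : Integrable (fun S => empiricalRisk φ S (erm S)) (Measure.pi fun _ => μ)) :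
    ∫ p, f p ∂μ.prod (Measure.pi fun _ => μ)
      ≤ ∫ S, empiricalRisk φ S (erm S) ∂(Measure.pi fun _ => μ)
        + ρ ^ 2 / (lam * (m + 1 : ℕ)) := by
  have hle := integral_le_integral_add_of_sum_replaceOne_le hf (he.comp_snd μ)
    (integrable_replaceOneGap hξ herm hρ (ae_norm_erm_sub_le hlam hφ hρ hmin))
    (integral_replaceOneGap_le hlam hξ herm hφ hρ hmin) ?_
  · rwa [integral_fun_snd (fun S => empiricalRisk φ S (erm S)), probReal_univ, one_smul] at hle
  filter_upwards [Measure.quasiMeasurePreserving_snd.ae (ae_pi_forall hφ),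
    Measure.quasiMeasurePreserving_snd.ae (ae_pi_forall hfle)] with p hp hfp
  rw [empiricalRisk, mul_inv_cancel_left₀ (by positivity), ← Finset.sum_add_distrib]
  refine Finset.sum_le_sum fun k _ => ?_
  have hfk := hfp k (replaceOne k p).2
  have hlip := (le_abs_self _).trans ((hp k).abs_sub_le (erm (replaceOne k p).2) (erm p.2))
  rw [show replaceOne k p = (p.2 k, (replaceOne k p).2) from rfl, replaceOneGap]
  linarith

end BiasedERM

section MeasurableChoice

open Filter Topology

variable {Z Ω E : Type*} [MeasurableSpace Z] {μ : Measure Z} {φ : Z → E → ℝ} {W : Ω → E} {ρ : ℝ}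

/-- The loss at `z` of the predictor `W ω`, set to `0` where `φ · (W ω)` is not integrable. There
the true risk of `W ω` is the junk value `0`, so that this function has the same integrals over `z`;
unlike the loss itself, it is always integrable in `(z, ω)`. -/
def integrablePart (μ : Measure Z) (φ : Z → E → ℝ) (W : Ω → E) (p : Z × Ω) : ℝ :=
  {ω | Integrable (fun z => φ z (W ω)) μ}.indicator (fun ω => φ p.1 (W ω)) p.2

lemma integral_integrablePart (ω : Ω) :
    ∫ z, integrablePart μ φ W (z, ω) ∂μ = ∫ z, φ z (W ω) ∂μ := by
  by_cases hω : Integrable (fun z => φ z (W ω)) μ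
  · simp [integrablePart, hω]
  · simp [integrablePart, hω, integral_undef hω]

lemma integrablePart_le {z : Z} (hz : ∀ w, 0 ≤ φ z w) (ω : Ω) :
    integrablePart μ φ W (z, ω) ≤ φ z (W ω) :=
  Set.indicator_le_self' (fun _ _ => hz _) ω

variable [MeasurableSpace Ω] {ν : Measure Ω}

lemma aestronglyMeasurable_uncurry_simpleFunc [SFinite ν] (W : SimpleFunc Ω E)
    (hW : ∀ ω, AEStronglyMeasurable (fun z => φ z (W ω)) μ) :
    AEStronglyMeasurable (fun p : Z × Ω => φ p.1 (W p.2)) (μ.prod ν) := by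
  have hsum : (fun p : Z × Ω => φ p.1 (W p.2)) = ∑ w ∈ W.range,
      (Prod.snd ⁻¹' (W ⁻¹' {w})).indicator fun p : Z × Ω => φ p.1 w := by
    funext p
    rw [Finset.sum_apply, Finset.sum_eq_single_of_mem (W p.2) (W.mem_range_self p.2)]
    · simp
    · intro w _ hw
      exact Set.indicator_of_notMem (s := Prod.snd ⁻¹' (W ⁻¹' {w})) (fun h => hw h.symm) _
  rw [hsum]
  refine Finset.aestronglyMeasurable_sum _ fun w hw => ?_
  obtain ⟨ω, rfl⟩ := SimpleFunc.mem_range.1 hw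
  exact (hW ω).comp_fst.indicator (measurable_snd (W.measurableSet_preimage _))

variable [NormedAddCommGroup E]

lemma isClosed_setOf_integrable [IsFiniteMeasure μ]
    (hlip : ∀ᵐ z ∂μ, ∀ u w, |φ z u - φ z w| ≤ ρ * ‖u - w‖) :
    IsClosed {w | Integrable (fun z => φ z w) μ} := by
  refine IsSeqClosed.isClosed fun w w₀ hw hlim => ?_
  have hconv : ∀ᵐ z ∂μ, Tendsto (fun k => φ z (w k)) atTop (𝓝 (φ z w₀)) := by
    filter_upwards [hlip] with z hz
    rw [tendsto_iff_norm_sub_tendsto_zero] at hlim ⊢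
    exact squeeze_zero (fun _ => norm_nonneg _) (fun k => hz (w k) w₀)
      (by simpa using hlim.const_mul ρ)
  have hdiff : Integrable (fun z => φ z w₀ - φ z (w 0)) μ :=
    .of_bound ((aestronglyMeasurable_of_tendsto_ae atTop (fun k => (hw k).1) hconv).sub (hw 0).1)
      (ρ * ‖w₀ - w 0‖) (hlip.mono fun z hz => hz _ _)
  exact (hdiff.add (hw 0)).congr (.of_forall fun z => sub_add_cancel _ _)

variable [MeasurableSpace E] [BorelSpace E] [SecondCountableTopology E]

lemma aestronglyMeasurable_uncurry_comp [SFinite ν] (hφ : ∀ᵐ z ∂μ, Continuous (φ z))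
    (hW : Measurable W) (hWm : ∀ᵐ ω ∂ν, AEStronglyMeasurable (fun z => φ z (W ω)) μ) :
    AEStronglyMeasurable (fun p : Z × Ω => φ p.1 (W p.2)) (μ.prod ν) := by
  rcases {w | AEStronglyMeasurable (fun z => φ z w) μ}.eq_empty_or_nonempty with hs | ⟨w₀, hw₀⟩
  · have hν : ν = 0 := ae_eq_bot.1 <| eventually_false_iff_eq_bot.1 <|
      hWm.mono fun ω hω => Set.eq_empty_iff_forall_notMem.1 hs (W ω) hω
    simp [hν]
  refine aestronglyMeasurable_of_tendsto_ae atTop (fun n => aestronglyMeasurable_uncurry_simpleFunc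
    (SimpleFunc.approxOn W hW _ w₀ hw₀ n) fun ω => SimpleFunc.approxOn_mem hW hw₀ n ω) ?_
  filter_upwards [Measure.quasiMeasurePreserving_fst.ae hφ,
    Measure.quasiMeasurePreserving_snd.ae hWm] with p hp hpW
  exact (hp.tendsto _).comp (SimpleFunc.tendsto_approxOn hW hw₀ (subset_closure hpW))

lemma integrable_uncurry_comp [IsFiniteMeasure μ] [IsFiniteMeasure ν] {h : E} {r : ℝ}
    (hlip : ∀ᵐ z ∂μ, ∀ u w, |φ z u - φ z w| ≤ ρ * ‖u - w‖) (hW : Measurable W)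
    (hr : ∀ᵐ ω ∂ν, ‖W ω - h‖ ≤ r) (hWi : ∀ᵐ ω ∂ν, Integrable (fun z => φ z (W ω)) μ) :
    Integrable (fun p : Z × Ω => φ p.1 (W p.2)) (μ.prod ν) := by
  rcases eq_zero_or_neZero ν with rfl | _
  · simp
  rcases eq_zero_or_neZero μ with rfl | _
  · simp
  obtain ⟨ω₀, hω₀, hω₀r⟩ := (hWi.and hr).exists
  have hcont : ∀ᵐ z ∂μ, Continuous (φ z) := hlip.mono fun z hz => continuous_of_abs_sub_le hz
  have hdiff : Integrable (fun p : Z × Ω => φ p.1 (W p.2) - φ p.1 (W ω₀)) (μ.prod ν) := by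
    refine .of_bound ((aestronglyMeasurable_uncurry_comp hcont hW
      (hWi.mono fun ω hω => hω.1)).sub hω₀.1.comp_fst) (|ρ| * (r + r)) ?_
    filter_upwards [Measure.quasiMeasurePreserving_fst.ae hlip,
      Measure.quasiMeasurePreserving_snd.ae hr] with p hp hpr
    refine (hp _ _).trans (mul_le_mul (le_abs_self ρ) ?_ (norm_nonneg _) (abs_nonneg ρ))
    rw [← sub_sub_sub_cancel_right _ _ h]
    exact (norm_sub_le _ _).trans (add_le_add hpr hω₀r)
  exact (hdiff.add (hω₀.comp_fst ν)).congr (.of_forall fun p => sub_add_cancel _ _)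

lemma integrable_integrablePart [IsFiniteMeasure μ] [IsFiniteMeasure ν] {h : E} {r : ℝ}
    (hlip : ∀ᵐ z ∂μ, ∀ u w, |φ z u - φ z w| ≤ ρ * ‖u - w‖) (hW : Measurable W)
    (hr : ∀ᵐ ω ∂ν, ‖W ω - h‖ ≤ r) : Integrable (integrablePart μ φ W) (μ.prod ν) := by
  set T := {ω | Integrable (fun z => φ z (W ω)) μ}
  have hT : MeasurableSet T := hW (isClosed_setOf_integrable hlip).measurableSet
  have hind : integrablePart μ φ W
      = (Prod.snd ⁻¹' T).indicator fun p : Z × Ω => φ p.1 (W p.2) := rfl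
  rw [hind, integrable_indicator_iff (measurable_snd hT), ← Set.univ_prod, IntegrableOn,
    ← Measure.prod_restrict, Measure.restrict_univ]
  exact integrable_uncurry_comp hlip hW (ae_restrict_of_ae hr) (ae_restrict_mem hT)

end MeasurableChoice

theorem stmt15_general {Z E : Type*} [MeasurableSpace Z] [NormedAddCommGroup E]
    [InnerProductSpace ℝ E] [CompleteSpace E] [SecondCountableTopology E] [MeasurableSpace E]
    [BorelSpace E] {μ : Measure Z} [IsProbabilityMeasure μ] {φ : Z → E → ℝ} {ξ : Z → E}
    {ρ lam : ℝ} {n : ℕ} {h : E} {erm : (Fin n → Z) → E} (hn : 1 ≤ n) (hlam : 0 < lam)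
    (hξ : Measurable ξ) (hφ : ∀ᵐ z ∂μ, IsRidgeLoss (φ z) (ξ z)) (hρ : ∀ᵐ z ∂μ, ‖ξ z‖ ≤ ρ)
    (herm : Measurable erm)
    (hmin : ∀ S w, biasedRisk φ lam h S (erm S) ≤ biasedRisk φ lam h S w)
    (hint : Integrable (fun S => ∫ z, φ z (erm S) ∂μ - empiricalRisk φ S (erm S))
      (Measure.pi fun _ => μ)) :
    ∫ S, (∫ z, φ z (erm S) ∂μ - empiricalRisk φ S (erm S)) ∂(Measure.pi fun _ => μ)
      ≤ ρ ^ 2 / (lam * n) := by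
  obtain ⟨m, rfl⟩ := Nat.exists_eq_add_of_le' hn
  have hf : Integrable (integrablePart μ φ erm) (μ.prod (Measure.pi fun _ => μ)) :=
    integrable_integrablePart ((hφ.and hρ).mono fun z hz => hz.1.abs_sub_le_norm hz.2) herm
      (ae_norm_erm_sub_le hlam hφ hρ hmin)
  have htrue : Integrable (fun S => ∫ z, φ z (erm S) ∂μ) (Measure.pi fun _ => μ) := by
    simpa only [integral_integrablePart] using hf.integral_prod_right
  have hemp : Integrable (fun S => empiricalRisk φ S (erm S)) (Measure.pi fun _ => μ) :=
    (htrue.sub hint).congr (.of_forall fun S => sub_sub_cancel _ _)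
  have hle := integral_le_integral_empiricalRisk_erm_add hlam hξ herm hφ hρ hmin hf
    (hφ.mono fun z hz => integrablePart_le hz.nonneg) hemp
  rw [integral_prod_symm _ hf] at hle
  simp only [integral_integrablePart] at hle
  rwa [integral_sub htrue hemp, sub_le_iff_le_add']

/-- Generalization error of the biased ERM:
`E_{Z_n∼μⁿ}[R_μ(w_h(Z_n)) - R_{Z_n}(w_h(Z_n))] ≤ L²R²/(λn)`. -/
theorem stmt15
    (d n : ℕ) (hd : 1 ≤ d) (hn : 1 ≤ n)
    (R L lam : ℝ) (hR : 0 ≤ R) (hL : 0 ≤ L) (hlam : 0 < lam)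
    (Y : Set ℝ) (ℓ : ℝ → ℝ → ℝ)
    (hℓ0 : ∀ a y, y ∈ Y → 0 ≤ ℓ a y)
    (hℓconv : ∀ y ∈ Y, ConvexOn ℝ Set.univ fun a => ℓ a y)
    (hℓlip : ∀ y ∈ Y, ∀ a b, |ℓ a y - ℓ b y| ≤ L * |a - b|)
    (μ : Measure (Pt d)) [IsProbabilityMeasure μ]
    (hμY : ∀ᵐ z ∂μ, z.2 ∈ Y) (hμR : ∀ᵐ z ∂μ, ‖z.1‖ ≤ R)
    (h : Vec d)
    -- the biased ERM, assumed measurable in the data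
    (erm : (Fin n → Pt d) → Vec d)
    (hermmeas : Measurable erm)
    (herm : ∀ S w, regRisk ℓ lam S h (erm S) ≤ regRisk ℓ lam S h w)
    (hInt : Integrable (fun S => trueRisk ℓ μ (erm S) - empRisk ℓ S (erm S))
      (Measure.pi fun _ : Fin n => μ)) :
    ∫ S, (trueRisk ℓ μ (erm S) - empRisk ℓ S (erm S))
        ∂(Measure.pi fun _ : Fin n => μ)
      ≤ L ^ 2 * R ^ 2 / (lam * n) := by
  have hridge : ∀ᵐ z ∂μ, IsRidgeLoss (fun w : Vec d => ℓ ⟪z.1, w⟫_ℝ z.2) (L • z.1) :=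
    hμY.mono fun z hz =>
      .of_convexOn_lipschitz (fun a => hℓ0 a z.2 hz) (hℓconv _ hz) (hℓlip _ hz) z.1
  have hnorm : ∀ᵐ z ∂μ, ‖L • z.1‖ ≤ L * R := hμR.mono fun z hz => by
    rw [norm_smul, Real.norm_of_nonneg hL]
    exact mul_le_mul_of_nonneg_left hz hL
  rw [← mul_pow]
  exact stmt15_general (φ := fun (z : Pt d) w => ℓ ⟪z.1, w⟫_ℝ z.2) hn hlam
    (measurable_fst.const_smul L) hridge hnorm hermmeas herm hInt
end
end
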